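/- arXiv:2512.12379 — 11 statements merged into one kernel-verified Lean document; each statement's English description precedes it below -/
import Mathlib

section
/- For every a ∈ (0, 1/2) there exists a constant C > 0 (depending only on a) with the following property: for all natural numbers n ≥ 1 and s with a ≤ s/n ≤ 1−a, and for all real numbers ε, y with 0 < ε ≤ a/2 and |y| ≤ ε, one has |s·log(1 + n y/s) + (n−s)·log(1 − n y/(n−s)) + n³y²/(2 s (n−s))| ≤ C · ε · n³y²/(s(n−s)). -/
open Real

lemma log_aux (x : ℝ) (h : |x| ≤ 1 / 2) :
    |Real.log (1 - x) + x + x ^ 2 / 2| ≤ 2 * |x| * x ^ 2 := by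
  have h1 := Real.abs_log_sub_add_sum_range_le (x := x) (by linarith) 2
  simp only [Finset.sum_range_succ, Finset.sum_range_zero] at h1
  norm_num at h1
  have e : Real.log (1 - x) + x + x ^ 2 / 2 = x + x ^ 2 / 2 + Real.log (1 - x) := by ring
  rw [e]
  refine h1.trans ?_
  rw [div_le_iff₀ (by linarith), ← sq_abs x]
  have : 0 ≤ |x| ^ 3 := by positivity
  nlinarith

lemma term_aux (a n t ε y : ℝ) (ha : 0 < a) (hn : 0 < n) (ht : a * n ≤ t)
    (hε : ε ≤ a / 2) (hy : |y| ≤ ε) :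
    |t * Real.log (1 - n * y / t) + n * y + n ^ 2 * y ^ 2 / (2 * t)| ≤
      2 / a * ε * (n ^ 2 * y ^ 2 / t) := by
  have ht0 : 0 < t := lt_of_lt_of_le (by positivity) ht
  have hx : |n * y / t| ≤ ε / a := by
    rw [abs_div, abs_mul, abs_of_pos hn, abs_of_pos ht0, div_le_div_iff₀ ht0 ha]
    have h0 := abs_nonneg y
    calc n * |y| * a = |y| * (a * n) := by ring
      _ ≤ ε * t := by gcongr; linarith
  have hea : ε / a ≤ 1 / 2 := by
    rw [div_le_iff₀ ha]; linarith
  have h := log_aux (n * y / t) (hx.trans hea)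
  have e : t * Real.log (1 - n * y / t) + n * y + n ^ 2 * y ^ 2 / (2 * t)
      = t * (Real.log (1 - n * y / t) + n * y / t + (n * y / t) ^ 2 / 2) := by
    field_simp
  rw [e, abs_mul, abs_of_pos ht0]
  calc _ ≤ t * (2 * |n * y / t| * (n * y / t) ^ 2) := by gcongr
    _ ≤ t * (2 * (ε / a) * (n * y / t) ^ 2) := by gcongr
    _ = _ := by field_simp

/-- Bernstein's Taylor-expansion lemma: the logarithm of the rescaled binomial
likelihood `(1 + ny/s)^s (1 − ny/(n−s))^{n−s}` equals `−n³y²/(2s(n−s))·(1 + O(ε))`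
uniformly for `|y| ≤ ε`, as long as `s/n` stays in `[a, 1−a]`. -/
theorem bernstein_taylor_lemma (a : ℝ) (ha : 0 < a) (ha' : a < 1/2) :
    ∃ C > 0, ∀ (n s : ℕ), 1 ≤ n →
      a ≤ (s : ℝ) / n → (s : ℝ) / n ≤ 1 - a →
      ∀ ε y : ℝ, 0 < ε → ε ≤ a / 2 → |y| ≤ ε →
      |(s : ℝ) * Real.log (1 + (n : ℝ) * y / s) +
        ((n : ℝ) - s) * Real.log (1 - (n : ℝ) * y / ((n : ℝ) - s)) +
        (n : ℝ) ^ 3 * y ^ 2 / (2 * (s : ℝ) * ((n : ℝ) - s))| ≤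
      C * ε * ((n : ℝ) ^ 3 * y ^ 2 / ((s : ℝ) * ((n : ℝ) - s))) := by
  refine ⟨2 / a, by positivity, ?_⟩
  intro n s hn h1 h2 ε y hε hεa hy
  have hn0 : (0 : ℝ) < n := by exact_mod_cast hn
  rw [le_div_iff₀ hn0] at h1
  rw [div_le_iff₀ hn0] at h2
  have h3 : a * (n : ℝ) ≤ (n : ℝ) - s := by linarith
  have han : 0 < a * (n : ℝ) := by positivity
  have hs : (0 : ℝ) < s := by linarith
  have hm : (0 : ℝ) < (n : ℝ) - s := by linarith
  have A := term_aux a n s ε (-y) ha hn0 h1 hεa (by rwa [abs_neg])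
  have B := term_aux a n (n - s) ε y ha hn0 h3 hεa hy
  have e1 : 1 - (n : ℝ) * -y / s = 1 + (n : ℝ) * y / s := by ring
  rw [e1, neg_sq] at A
  have key : (n : ℝ) ^ 3 * y ^ 2 / ((s : ℝ) * ((n : ℝ) - s))
      = (n : ℝ) ^ 2 * y ^ 2 / s + (n : ℝ) ^ 2 * y ^ 2 / ((n : ℝ) - s) := by
    have := hm.ne'
    field_simp
    ring
  have key2 : (n : ℝ) ^ 3 * y ^ 2 / (2 * (s : ℝ) * ((n : ℝ) - s))
      = (n : ℝ) ^ 2 * y ^ 2 / (2 * s) + (n : ℝ) ^ 2 * y ^ 2 / (2 * ((n : ℝ) - s)) := by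
    have := hm.ne'
    field_simp
    ring
  rw [key, key2, mul_add]
  refine le_trans (le_of_eq ?_) ((abs_add_le _ _).trans (add_le_add A B))
  congr 1
  ring
end

section
/- Let n, s be natural numbers with 0 < s < n, let θ_n := s/n, let f : [0,1] → [0, M] be measurable, and let 0 < ε < min(θ_n, 1−θ_n). Then the tail integral ∫ over {y ∈ [−θ_n, 1−θ_n] : |y| ≥ ε} of f(θ_n + y) · r_n(y) dy is at most M · max(r_n(−ε), r_n(ε)), where r_n(y) := (1 + n y/s)^s (1 − n y/(n−s))^{n−s}. -/
open MeasureTheory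

lemma r_anti (p q : ℕ) (hp : 0 < p) (hq : 0 < q) (u v : ℝ) (hv : 0 ≤ v) (hvu : v ≤ u) (hu : u ≤ q) :
    (1 + u / p) ^ p * (1 - u / q) ^ q ≤ (1 + v / p) ^ p * (1 - v / q) ^ q := by
  have hp' : (0 : ℝ) < p := by exact_mod_cast hp
  have hq' : (0 : ℝ) < q := by exact_mod_cast hq
  have hvp : 0 ≤ v / p := by positivity
  have hvq : 0 ≤ v / q := by positivity
  have hdp : 0 ≤ (u - v) / p := div_nonneg (by linarith) hp'.le
  have hdq : 0 ≤ (u - v) / q := div_nonneg (by linarith) hq'.le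
  have huq : u / q ≤ 1 := (div_le_one hq').2 hu
  have hvq1 : v / q ≤ 1 := (div_le_one hq').2 (hvu.trans hu)
  have e1 : u / p = v / p + (u - v) / p := by ring
  have e2 : u / q = v / q + (u - v) / q := by ring
  have a1 : 1 + u / p ≤ (1 + v / p) * Real.exp ((u - v) / p) := by
    have := mul_le_mul_of_nonneg_left (Real.add_one_le_exp ((u - v) / p))
      (by linarith : 0 ≤ 1 + v / p)
    nlinarith [mul_nonneg hvp hdp]
  have a2 : 1 - u / q ≤ (1 - v / q) * Real.exp (-((u - v) / q)) := by
    have := mul_le_mul_of_nonneg_left (Real.add_one_le_exp (-((u - v) / q)))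
      (by linarith : 0 ≤ 1 - v / q)
    nlinarith [mul_nonneg hvq hdq]
  have b1 := pow_le_pow_left₀ (by linarith : 0 ≤ 1 + u / p) a1 p
  have b2 := pow_le_pow_left₀ (by linarith : 0 ≤ 1 - u / q) a2 q
  rw [mul_pow, ← Real.exp_nat_mul] at b1 b2
  have c1 : (p : ℝ) * ((u - v) / p) = u - v := by field_simp
  have c2 : (q : ℝ) * -((u - v) / q) = -(u - v) := by field_simp
  rw [c1] at b1
  rw [c2] at b2
  have hexp : Real.exp (u - v) * Real.exp (-(u - v)) = 1 := by
    rw [← Real.exp_add]; simp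
  calc _ ≤ ((1 + v / p) ^ p * Real.exp (u - v)) * ((1 - v / q) ^ q * Real.exp (-(u - v))) :=
        mul_le_mul b1 b2 (pow_nonneg (by linarith) _) (by positivity)
    _ = ((1 + v / p) ^ p * (1 - v / q) ^ q) * (Real.exp (u - v) * Real.exp (-(u - v))) := by ring
    _ = _ := by rw [hexp, mul_one]

/-- Bernstein's estimate of the remainder term `R`: outside the interval
`(−ε, ε)` around `0` (i.e. outside `(θ_n − ε, θ_n + ε)` around the maximum
likelihood estimate `θ_n = s/n`), the integral of the bounded prior times the
likelihood is controlled by the boundary values of the rescaled likelihood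
`r_n(y) = (1 + ny/s)^s (1 − ny/(n−s))^{n−s}`. -/
theorem bernstein_tail_estimate (n s : ℕ) (h1 : 0 < s) (h2 : s < n)
    (f : ℝ → ℝ) (M : ℝ) (hf_meas : Measurable f)
    (hf : ∀ x ∈ Set.Icc (0:ℝ) 1, f x ∈ Set.Icc 0 M)
    (ε : ℝ) (hε0 : 0 < ε) (hε : ε < min ((s : ℝ) / n) (1 - (s : ℝ) / n)) :
    (∫ y in {y : ℝ | y ∈ Set.Icc (-((s : ℝ) / n)) (1 - (s : ℝ) / n) ∧ ε ≤ |y|},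
        f ((s : ℝ) / n + y) *
          ((1 + (n : ℝ) * y / s) ^ s * (1 - (n : ℝ) * y / ((n : ℝ) - s)) ^ (n - s))) ≤
    M * max
        ((1 + (n : ℝ) * (-ε) / s) ^ s * (1 - (n : ℝ) * (-ε) / ((n : ℝ) - s)) ^ (n - s))
        ((1 + (n : ℝ) * ε / s) ^ s * (1 - (n : ℝ) * ε / ((n : ℝ) - s)) ^ (n - s)) := by
  have hs : (0 : ℝ) < s := by exact_mod_cast h1
  have hn : (0 : ℝ) < n := by exact_mod_cast h1.trans h2
  have hsn : (s : ℝ) < n := by exact_mod_cast h2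
  have hk : 0 < n - s := by omega
  have hcast : ((n - s : ℕ) : ℝ) = (n : ℝ) - s := by push_cast [h2.le]; rfl
  rw [lt_min_iff] at hε
  have hM : 0 ≤ M := by
    have := hf 0 (by simp)
    exact this.1.trans this.2
  have hns : (n : ℝ) * (s / n) = s := by field_simp
  set B := max
        ((1 + (n : ℝ) * (-ε) / s) ^ s * (1 - (n : ℝ) * (-ε) / ((n : ℝ) - s)) ^ (n - s))
        ((1 + (n : ℝ) * ε / s) ^ s * (1 - (n : ℝ) * ε / ((n : ℝ) - s)) ^ (n - s)) with hB
  set S := {y : ℝ | y ∈ Set.Icc (-((s : ℝ) / n)) (1 - (s : ℝ) / n) ∧ ε ≤ |y|} with hS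
  have hsub : S ⊆ Set.Icc (-((s : ℝ) / n)) (1 - (s : ℝ) / n) := fun y hy => hy.1
  have hvol : volume (Set.Icc (-((s : ℝ) / n)) (1 - (s : ℝ) / n)) = 1 := by
    rw [Real.volume_Icc]; simp
  have hvS : volume S ≤ 1 := hvol ▸ measure_mono hsub
  have hreal : volume.real S ≤ 1 := by
    have := ENNReal.toReal_mono ENNReal.one_ne_top hvS
    simpa [Measure.real] using this
  have key : ∀ y ∈ S, 0 ≤ ((1 + (n : ℝ) * y / s) ^ s * (1 - (n : ℝ) * y / ((n : ℝ) - s)) ^ (n - s)) ∧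
      ((1 + (n : ℝ) * y / s) ^ s * (1 - (n : ℝ) * y / ((n : ℝ) - s)) ^ (n - s)) ≤ B := by
    rintro y ⟨⟨hy1, hy2⟩, hy3⟩
    have l1 : -(s : ℝ) ≤ n * y := by nlinarith
    have l2 : (n : ℝ) * y ≤ n - s := by nlinarith
    constructor
    · apply mul_nonneg
      · apply pow_nonneg
        have : -1 ≤ (n : ℝ) * y / s := by rw [le_div_iff₀ hs]; linarith
        linarith
      · apply pow_nonneg
        have : (n : ℝ) * y / (n - s) ≤ 1 := by rw [div_le_one (by linarith)]; linarith
        linarith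
    · rcases le_abs.1 hy3 with h | h
      · refine le_trans ?_ (le_max_right _ _)
        have := r_anti s (n - s) h1 hk (n * y) (n * ε) (by positivity) (by gcongr)
          (by rw [hcast]; exact l2)
        rwa [hcast] at this
      · refine le_trans ?_ (le_max_left _ _)
        have := r_anti (n - s) s hk h1 (n * (-y)) (n * ε) (by positivity) (by gcongr)
          (by linarith)
        rw [hcast] at this
        simp only [mul_neg, neg_div, sub_neg_eq_add, ← sub_eq_add_neg] at this ⊢
        linarith
  have hB0 : 0 ≤ B := by
    have hm : ε ∈ S := ⟨⟨by linarith, by linarith⟩, le_abs_self ε⟩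
    exact (key ε hm).1.trans (key ε hm).2
  have hbound := norm_setIntegral_le_of_norm_le_const (μ := volume) (s := S) (C := M * B)
    (f := fun y => f ((s : ℝ) / n + y) *
          ((1 + (n : ℝ) * y / s) ^ s * (1 - (n : ℝ) * y / ((n : ℝ) - s)) ^ (n - s)))
    (lt_of_le_of_lt hvS ENNReal.one_lt_top) (by
      intro y hy
      obtain ⟨k1, k2⟩ := key y hy
      obtain ⟨m1, m2⟩ := hf ((s : ℝ) / n + y) ⟨by linarith [hy.1.1], by linarith [hy.1.2]⟩
      rw [Real.norm_of_nonneg (mul_nonneg m1 k1)]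
      exact mul_le_mul m2 k2 k1 hM)
  calc _ ≤ _ := le_trans (le_abs_self _) hbound
    _ ≤ M * B * 1 := by gcongr
    _ = M * B := mul_one _
end

section
/- Let a ∈ ℝ, s > 0, and let f : ℝ → [0,1] be a measurable, integrable function with f(a) = 1, with f(a+h) = 1 − s²h² + o(h²) as h → 0, and such that for every δ > 0 one has sup over {x : |x−a| ≥ δ} of f(x) < 1. Let ψ : ℝ → ℝ be bounded, measurable, and continuous at a. Then for all −∞ ≤ x₁ < x₂ ≤ +∞, ∫_{x₁}^{x₂} ψ(a + u/(s√n)) · f(a + u/(s√n))^n du converges to ψ(a) · ∫_{x₁}^{x₂} e^{−u²} du as n → ∞. -/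
open MeasureTheory Filter Asymptotics

/-- Von Mises's 1919 one-dimensional auxiliary theorem (equal factors case):
for a function `f ≤ 1` with a unique nondegenerate maximum `f(a) = 1`,
`∫_{x₁}^{x₂} ψ(a + u/(s√n)) f(a + u/(s√n))^n du → ψ(a) ∫_{x₁}^{x₂} e^{−u²} du`,
with possibly infinite endpoints `x₁ < x₂`. -/
theorem vonMises_aux_one_dim
    (a s : ℝ) (hs : 0 < s)
    (f : ℝ → ℝ) (hf_meas : Measurable f) (hf_int : Integrable f)
    (hf01 : ∀ x, f x ∈ Set.Icc (0:ℝ) 1) (hfa : f a = 1)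
    (hexp : (fun h : ℝ => f (a + h) - (1 - s ^ 2 * h ^ 2)) =o[nhds 0] (fun h : ℝ => h ^ 2))
    (hsup : ∀ δ > 0, ∃ m < (1:ℝ), ∀ x, δ ≤ |x - a| → f x ≤ m)
    (ψ : ℝ → ℝ) (hψ_meas : Measurable ψ) (hψ_bdd : ∃ B, ∀ x, |ψ x| ≤ B)
    (hψ_cont : ContinuousAt ψ a)
    (x₁ x₂ : EReal) (h12 : x₁ < x₂) :
    Tendsto (fun n : ℕ =>
      ∫ u in {u : ℝ | x₁ < (u : EReal) ∧ (u : EReal) < x₂},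
        ψ (a + u / (s * Real.sqrt n)) * f (a + u / (s * Real.sqrt n)) ^ n)
      atTop
      (nhds (ψ a * ∫ u in {u : ℝ | x₁ < (u : EReal) ∧ (u : EReal) < x₂},
        Real.exp (-u ^ 2))) := by
  obtain ⟨B, hB⟩ := hψ_bdd
  have hB0 : 0 ≤ B := (abs_nonneg _).trans (hB a)
  -- local bound
  have hloc : ∃ δ > 0, ∀ h : ℝ, |h| < δ → f (a + h) ≤ Real.exp (-(s ^ 2 * h ^ 2 / 2)) := by
    have h1 := hexp.def (c := s ^ 2 / 2) (by positivity)
    obtain ⟨δ, hδ, h2⟩ := Metric.eventually_nhds_iff.1 h1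
    refine ⟨δ, hδ, fun h hh => ?_⟩
    have h3 := h2 (y := h) (by simpa [Real.dist_eq] using hh)
    rw [Real.norm_eq_abs, Real.norm_eq_abs, abs_of_nonneg (sq_nonneg h)] at h3
    have h4 := (abs_le.1 h3).2
    have h5 := Real.add_one_le_exp (-(s ^ 2 * h ^ 2 / 2))
    linarith
  obtain ⟨δ, hδ, hloc⟩ := hloc
  obtain ⟨m, hm1, hm2, hfar⟩ : ∃ m : ℝ, m < 1 ∧ 1 / 2 ≤ m ∧ ∀ x, δ ≤ |x - a| → f x ≤ m := by
    obtain ⟨m, hm, h⟩ := hsup δ hδ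
    exact ⟨max m (1 / 2), max_lt hm (by norm_num), le_max_right _ _,
      fun x hx => (h x hx).trans (le_max_left _ _)⟩
  set S : Set ℝ := {u : ℝ | x₁ < (u : EReal) ∧ (u : EReal) < x₂} with hS
  set F : ℕ → ℝ → ℝ := fun n u =>
    ψ (a + u / (s * Real.sqrt n)) * f (a + u / (s * Real.sqrt n)) ^ n with hF
  have hFm : ∀ n, Measurable (F n) := fun n => by
    have : Measurable fun u : ℝ => a + u / (s * Real.sqrt n) := by fun_prop
    exact (hψ_meas.comp this).mul ((hf_meas.comp this).pow_const n)
  set A : ℕ → Set ℝ := fun n => {u : ℝ | |u / (s * Real.sqrt n)| < δ} with hA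
  have hAm : ∀ n, MeasurableSet (A n) := fun n => by
    have : Measurable fun u : ℝ => |u / (s * Real.sqrt n)| := by fun_prop
    exact measurableSet_lt this measurable_const
  have hFb : ∀ n u, |F n u| ≤ B * f (a + u / (s * Real.sqrt n)) ^ n := fun n u => by
    have h0 := pow_nonneg (hf01 (a + u / (s * Real.sqrt n))).1 n
    simp only [hF]
    rw [abs_mul, abs_of_nonneg h0]
    exact mul_le_mul_of_nonneg_right (hB _) h0
  have hnear : ∀ n ≥ 1, ∀ u ∈ A n, |F n u| ≤ B * Real.exp (-(1 / 2) * u ^ 2) := by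
    intro n hn u hu
    refine (hFb n u).trans (mul_le_mul_of_nonneg_left ?_ hB0)
    have hn0 : (0:ℝ) < n := by exact_mod_cast hn
    calc f (a + u / (s * Real.sqrt n)) ^ n
        ≤ Real.exp (-(s ^ 2 * (u / (s * Real.sqrt n)) ^ 2 / 2)) ^ n :=
          pow_le_pow_left₀ (hf01 _).1 (hloc _ hu) n
      _ = Real.exp (-(1 / 2) * u ^ 2) := by
          rw [← Real.exp_nat_mul]
          congr 1
          rw [div_pow, mul_pow, Real.sq_sqrt hn0.le]
          field_simp
  have hfarb : ∀ n ≥ 1, ∀ u ∉ A n,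
      |F n u| ≤ (2 * B * m ^ n) * f (a + u / (s * Real.sqrt n)) := by
    intro n hn u hu
    refine (hFb n u).trans ?_
    obtain ⟨k, rfl⟩ : ∃ k, n = k + 1 := ⟨n - 1, by omega⟩
    set y := a + u / (s * Real.sqrt ((k + 1 : ℕ) : ℝ)) with hy
    have hym : f y ≤ m := hfar y (by
      simp only [hA, Set.mem_ofPred_eq, not_lt] at hu
      simpa [hy] using hu)
    have h0 := (hf01 y).1
    have h1 : f y ^ k ≤ m ^ k := pow_le_pow_left₀ h0 hym k
    have h2 : m ^ k ≤ 2 * m ^ (k + 1) := by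
      have : 0 ≤ m ^ k := by positivity
      rw [pow_succ]; nlinarith
    calc B * f y ^ (k + 1) = B * (f y ^ k * f y) := by rw [pow_succ]
      _ ≤ B * ((2 * m ^ (k + 1)) * f y) := by gcongr; exact h1.trans h2
      _ = _ := by ring
  have hgauss : Integrable fun u : ℝ => B * Real.exp (-(1 / 2) * u ^ 2) :=
    (integrable_exp_neg_mul_sq (by norm_num)).const_mul B
  have hfi : ∀ n : ℕ, n ≥ 1 → Integrable fun u : ℝ =>
      (2 * B * m ^ n) * f (a + u / (s * Real.sqrt n)) := by
    intro n hn
    have hn0 : (0:ℝ) < n := by exact_mod_cast hn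
    have hc : s * Real.sqrt n ≠ 0 := by positivity
    exact ((hf_int.comp_add_left a).comp_div hc).const_mul _
  have hInear : ∀ n ≥ 1, Integrable ((A n).indicator (F n)) := by
    intro n hn
    refine hgauss.mono' ((hFm n).indicator (hAm n)).aestronglyMeasurable
      (Eventually.of_forall fun u => ?_)
    by_cases hu : u ∈ A n
    · rw [Set.indicator_of_mem hu]; exact hnear n hn u hu
    · rw [Set.indicator_of_notMem hu, norm_zero]; positivity
  have hfarb' : ∀ n ≥ 1, ∀ u, ‖((A n)ᶜ).indicator (F n) u‖ ≤
      (2 * B * m ^ n) * f (a + u / (s * Real.sqrt n)) := by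
    intro n hn u
    by_cases hu : u ∈ A n
    · rw [Set.indicator_of_notMem (by simpa using hu), norm_zero]
      have := (hf01 (a + u / (s * Real.sqrt n))).1
      positivity
    · rw [Set.indicator_of_mem (by simpa using hu)]; exact hfarb n hn u hu
  have hIfar : ∀ n ≥ 1, Integrable (((A n)ᶜ).indicator (F n)) := by
    intro n hn
    exact (hfi n hn).mono' ((hFm n).indicator (hAm n).compl).aestronglyMeasurable
      (Eventually.of_forall (hfarb' n hn))
  -- far part tends to zero
  have hlimfar : Tendsto (fun n => ∫ u in S, ((A n)ᶜ).indicator (F n) u) atTop (nhds 0) := by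
    have hz : Tendsto (fun n : ℕ => (2 * B * s * ∫ y, f y) * ((n : ℝ) * m ^ n)) atTop (nhds 0) := by
      simpa using (tendsto_self_mul_const_pow_of_lt_one (by linarith) hm1).const_mul
        (2 * B * s * ∫ y, f y)
    refine squeeze_zero_norm' ?_ hz
    filter_upwards [eventually_ge_atTop 1] with n hn
    have hn1 : (1:ℝ) ≤ n := by exact_mod_cast hn
    have hsq : Real.sqrt n ≤ n := by
      rw [Real.sqrt_le_left (by linarith)]; nlinarith
    have hI0 : 0 ≤ ∫ y, f y := integral_nonneg fun y => (hf01 y).1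
    calc ‖∫ u in S, ((A n)ᶜ).indicator (F n) u‖
        ≤ ∫ u in S, (2 * B * m ^ n) * f (a + u / (s * Real.sqrt n)) :=
          norm_integral_le_of_norm_le (hfi n hn).integrableOn
            (Eventually.of_forall (hfarb' n hn))
      _ ≤ ∫ u, (2 * B * m ^ n) * f (a + u / (s * Real.sqrt n)) :=
          setIntegral_le_integral (hfi n hn) (Eventually.of_forall fun u =>
            (norm_nonneg _).trans (hfarb' n hn u))
      _ = (2 * B * m ^ n) * ((s * Real.sqrt n) * ∫ y, f y) := by
          rw [integral_const_mul,
            Measure.integral_comp_div (fun y => f (a + y)) (s * Real.sqrt n),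
            integral_add_left_eq_self f a, abs_of_nonneg (by positivity), smul_eq_mul]
      _ ≤ (2 * B * m ^ n) * ((s * n) * ∫ y, f y) := by gcongr
      _ = _ := by ring
  -- pointwise limits
  have hh : ∀ u : ℝ, Tendsto (fun n : ℕ => u / (s * Real.sqrt n)) atTop (nhds 0) := fun u =>
    Tendsto.const_div_atTop ((Real.tendsto_sqrt_atTop.comp
      tendsto_natCast_atTop_atTop).const_mul_atTop hs) u
  have hpt : ∀ u : ℝ, Tendsto (fun n => F n u) atTop (nhds (ψ a * Real.exp (-u ^ 2))) := by
    intro u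
    have hx : Tendsto (fun n : ℕ => a + u / (s * Real.sqrt n)) atTop (nhds a) := by
      simpa using (hh u).const_add a
    refine (hψ_cont.tendsto.comp hx).mul ?_
    have key : Tendsto (fun n : ℕ => (n : ℝ) * (f (a + u / (s * Real.sqrt n)) - 1)) atTop
        (nhds (-u ^ 2)) := by
      have h1 := (isBigO_refl (fun n : ℕ => (n : ℝ)) atTop).mul_isLittleO
        (hexp.comp_tendsto (hh u))
      have h2 : (fun n : ℕ => (n : ℝ) * ((fun h : ℝ => h ^ 2) ∘
          fun n : ℕ => u / (s * Real.sqrt n)) n) =ᶠ[atTop] fun _ => u ^ 2 / s ^ 2 := by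
        filter_upwards [eventually_ge_atTop 1] with n hn
        have hn0 : (0:ℝ) < n := by exact_mod_cast hn
        simp only [Function.comp]
        rw [div_pow, mul_pow, Real.sq_sqrt hn0.le]
        field_simp
      have h3 := (h1.trans_eventuallyEq h2).trans_isBigO (isBigO_const_const (u ^ 2 / s ^ 2)
        (one_ne_zero (α := ℝ)) atTop)
      have h4 := (isLittleO_one_iff ℝ).1 h3
      have h5 := h4.sub_const (u ^ 2)
      rw [zero_sub] at h5
      refine h5.congr' ?_
      filter_upwards [h2, eventually_ge_atTop 1] with n hn _
      simp only [Function.comp] at hn ⊢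
      have : s ^ 2 * (u ^ 2 / s ^ 2) = u ^ 2 := by field_simp
      rw [← this, ← hn]
      ring
    have := Real.tendsto_one_add_pow_exp_of_tendsto key
    simpa using this
  have hlimnear : Tendsto (fun n => ∫ u in S, (A n).indicator (F n) u) atTop
      (nhds (∫ u in S, ψ a * Real.exp (-u ^ 2))) := by
    refine tendsto_integral_filter_of_dominated_convergence
      (fun u : ℝ => B * Real.exp (-(1 / 2) * u ^ 2)) ?_ ?_ hgauss.integrableOn ?_
    · exact Eventually.of_forall fun n => ((hFm n).indicator (hAm n)).aestronglyMeasurable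
    · filter_upwards [eventually_ge_atTop 1] with n hn
      refine Eventually.of_forall fun u => ?_
      by_cases hu : u ∈ A n
      · rw [Set.indicator_of_mem hu]; exact hnear n hn u hu
      · rw [Set.indicator_of_notMem hu, norm_zero]; positivity
    · refine Eventually.of_forall fun u => (hpt u).congr' ?_
      have := (hh u).abs.eventually_lt_const (u := δ) (by simpa using hδ)
      filter_upwards [this] with n hn
      exact (Set.indicator_of_mem (s := A n) hn (F n)).symm
  rw [integral_const_mul] at hlimnear
  have hsum := hlimnear.add hlimfar
  rw [add_zero] at hsum
  refine hsum.congr' ?_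
  filter_upwards [eventually_ge_atTop 1] with n hn
  rw [← integral_add (hInear n hn).integrableOn (hIfar n hn).integrableOn]
  congr 1
  funext u
  exact congrFun (Set.indicator_self_add_compl (A n) (F n)) u
end

section
/- Fix a ∈ (0,1). Then √(n/(2a(1−a))) · ∫_0^1 (x/a)^{a n} ((1−x)/(1−a))^{(1−a)n} dx converges to √π as n → ∞ (the exponents a n and (1−a)n being real). -/
open MeasureTheory Filter Real

lemma vm_log_limit (c : ℝ) :
    Tendsto (fun n : ℕ => (n : ℝ) * (Real.log (1 - c / √(n : ℝ)) + c / √(n : ℝ)))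
      atTop (nhds (-(c ^ 2 / 2))) := by
  have hs : Tendsto (fun n : ℕ => √(n : ℝ)) atTop atTop :=
    Real.tendsto_sqrt_atTop.comp tendsto_natCast_atTop_atTop
  have hd : ∀ d : ℝ, Tendsto (fun n : ℕ => d / √(n : ℝ)) atTop (nhds 0) := fun d =>
    hs.const_div_atTop d
  have hb : Tendsto (fun n : ℕ => (|c| ^ 3 / √(n : ℝ)) / (1 - |c| / √(n : ℝ))) atTop (nhds 0) := by
    have := (hd (|c| ^ 3)).div ((hd |c|).const_sub 1) (by norm_num)
    simpa [Pi.div_def] using this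
  rw [tendsto_iff_norm_sub_tendsto_zero]
  refine squeeze_zero' (Eventually.of_forall fun _ => norm_nonneg _) ?_ hb
  filter_upwards [(hd |c|).eventually_lt_const one_pos, eventually_gt_atTop 0] with n hn hn0
  have hnpos : (0 : ℝ) < n := by exact_mod_cast hn0
  have hq : 0 < √(n : ℝ) := Real.sqrt_pos.2 hnpos
  have habs : |c / √(n : ℝ)| = |c| / √(n : ℝ) := by rw [abs_div, abs_of_pos hq]
  have key := Real.abs_log_sub_add_sum_range_le (x := c / √(n : ℝ)) (by rw [habs]; exact hn) 2
  rw [habs] at key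
  simp only [Finset.sum_range_succ, Finset.sum_range_zero] at key
  set q := √(n : ℝ) with hqdef
  have hqq : (n : ℝ) = q ^ 2 := (Real.sq_sqrt hnpos.le).symm
  rw [Real.norm_eq_abs, hqq]
  have h1 : q ^ 2 * (Real.log (1 - c / q) + c / q) - -(c ^ 2 / 2)
      = q ^ 2 * ((0 + (c / q) ^ (0 + 1) / (((0 : ℕ) : ℝ) + 1)
        + (c / q) ^ (1 + 1) / (((1 : ℕ) : ℝ) + 1)) + Real.log (1 - c / q)) := by
    push_cast
    field_simp
    ring
  rw [h1, abs_mul, abs_of_pos (by positivity : 0 < q ^ 2)]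
  calc _ ≤ q ^ 2 * ((|c| / q) ^ (2 + 1) / (1 - |c| / q)) := by gcongr
    _ = _ := by
      rw [← mul_div_assoc]
      congr 1
      rw [div_pow]
      field_simp

lemma vm_log_bound (p x : ℝ) (hp : p ∈ Set.Ioo (0:ℝ) 1) (hx : x ∈ Set.Ioo (0:ℝ) 1) :
    p * Real.log (x / p) ≤ x - p - (x - p) ^ 2 / 4 := by
  obtain ⟨hp0, hp1⟩ := hp
  obtain ⟨hx0, hx1⟩ := hx
  have hy : 0 < x / p := div_pos hx0 hp0
  have h1 : Real.log (x / p) ≤ 2 * (√x / √p - 1) := by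
    have h := Real.log_le_sub_one_of_pos (Real.sqrt_pos.2 hy)
    rw [Real.log_sqrt hy.le, Real.sqrt_div hx0.le] at h
    linarith
  have hu : 0 < √x := Real.sqrt_pos.2 hx0
  have hv : 0 < √p := Real.sqrt_pos.2 hp0
  have hu1 : √x ≤ 1 := Real.sqrt_le_one.2 hx1.le
  have hv1 : √p ≤ 1 := Real.sqrt_le_one.2 hp1.le
  have hxu : x = √x ^ 2 := (Real.sq_sqrt hx0.le).symm
  have hpv : p = √p ^ 2 := (Real.sq_sqrt hp0.le).symm
  have h2 : p * Real.log (x / p) ≤ p * (2 * (√x / √p - 1)) := by gcongr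
  refine h2.trans ?_
  set u := √x
  set v := √p
  rw [hxu, hpv]
  have h3 : v ^ 2 * (2 * (u / v - 1)) = 2 * u * v - 2 * v ^ 2 := by field_simp
  rw [h3]
  have h4 : (u + v) ^ 2 ≤ 4 := by nlinarith
  nlinarith [mul_le_mul_of_nonneg_left h4 (sq_nonneg (u - v))]

/-- Von Mises's 1919 determination of the normalizing constant of the binomial
posterior with constant relative frequency `a`:
`r_n ∫₀¹ (x/a)^{an} ((1−x)/(1−a))^{(1−a)n} dx → √π` with `r_n = √(n/(2a(1−a)))`. -/
theorem vonMises_normalizing_constant (a : ℝ) (ha : a ∈ Set.Ioo (0:ℝ) 1) :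
    Tendsto (fun n : ℕ =>
      Real.sqrt ((n : ℝ) / (2 * a * (1 - a))) *
        ∫ x in (0:ℝ)..1,
          (x / a) ^ (a * (n : ℝ)) * ((1 - x) / (1 - a)) ^ ((1 - a) * (n : ℝ)))
      atTop (nhds (Real.sqrt π)) := by
  have ha0 : 0 < a := ha.1
  have ha1 : 0 < 1 - a := sub_pos.2 ha.2
  have hb : 1 - a ∈ Set.Ioo (0:ℝ) 1 := ⟨ha1, by linarith⟩
  have hkk : 0 < 2 * a * (1 - a) := by positivity
  set k := √(2 * a * (1 - a)) with hk
  have hkpos : 0 < k := Real.sqrt_pos.2 hkk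
  have hk2 : k ^ 2 = 2 * a * (1 - a) := Real.sq_sqrt hkk.le
  let g : ℕ → ℝ → ℝ := fun n => (Set.Ioo (0:ℝ) 1).indicator fun x =>
    (x / a) ^ (a * (n : ℝ)) * ((1 - x) / (1 - a)) ^ ((1 - a) * (n : ℝ))
  have hgm : ∀ n, Measurable (g n) := fun n => by
    refine Measurable.indicator ?_ measurableSet_Ioo
    fun_prop
  have hgexp : ∀ n : ℕ, ∀ x ∈ Set.Ioo (0:ℝ) 1, g n x =
      Real.exp ((n : ℝ) * (a * Real.log (x / a) + (1 - a) * Real.log ((1 - x) / (1 - a)))) := by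
    intro n x hx
    have h1 : 0 < x / a := div_pos hx.1 ha0
    have h2 : 0 < (1 - x) / (1 - a) := div_pos (by linarith [hx.2]) ha1
    simp only [g]
    rw [Set.indicator_of_mem hx, Real.rpow_def_of_pos h1, Real.rpow_def_of_pos h2, ← Real.exp_add]
    congr 1
    ring
  have hgauss : ∫ t : ℝ, Real.exp (-t ^ 2) = √π := by
    have := integral_gaussian 1
    simpa using this
  have hmain : Tendsto (fun n : ℕ => ∫ t : ℝ, g n (a + k / √(n : ℝ) * t)) atTop (nhds √π) := by
    rw [← hgauss]
    refine tendsto_integral_filter_of_dominated_convergence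
      (fun t => Real.exp (-(k ^ 2 / 2) * t ^ 2)) ?_ ?_ ?_ ?_
    · exact Eventually.of_forall fun n =>
        ((hgm n).comp (by fun_prop : Measurable fun t : ℝ => a + k / √(n : ℝ) * t)).aestronglyMeasurable
    · filter_upwards [eventually_gt_atTop 0] with n hn0
      refine Eventually.of_forall fun t => ?_
      have hnpos : (0 : ℝ) < n := by exact_mod_cast hn0
      have hq : 0 < √(n : ℝ) := Real.sqrt_pos.2 hnpos
      have hqq : √(n : ℝ) ^ 2 = n := Real.sq_sqrt hnpos.le
      by_cases hx : a + k / √(n : ℝ) * t ∈ Set.Ioo (0:ℝ) 1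
      · rw [hgexp n _ hx, Real.norm_eq_abs, Real.abs_exp, Real.exp_le_exp]
        have b1 := vm_log_bound a _ ha hx
        have b2 := vm_log_bound (1 - a) (1 - (a + k / √(n : ℝ) * t)) hb
          ⟨by linarith [hx.2], by linarith [hx.1]⟩
        set x := a + k / √(n : ℝ) * t with hxdef
        have b3 : a * Real.log (x / a) + (1 - a) * Real.log ((1 - x) / (1 - a))
            ≤ -((x - a) ^ 2 / 2) := by nlinarith
        calc _ ≤ (n : ℝ) * -((x - a) ^ 2 / 2) := by gcongr
          _ = _ := by
            have : x - a = k / √(n : ℝ) * t := by rw [hxdef]; ring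
            rw [this, mul_pow, div_pow, hqq]
            field_simp
      · have : g n (a + k / √(n : ℝ) * t) = 0 := Set.indicator_of_notMem hx _
        rw [this, norm_zero]
        positivity
    · exact integrable_exp_neg_mul_sq (by positivity)
    · refine Eventually.of_forall fun t => ?_
      have hs : Tendsto (fun n : ℕ => √(n : ℝ)) atTop atTop :=
        Real.tendsto_sqrt_atTop.comp tendsto_natCast_atTop_atTop
      have hx : Tendsto (fun n : ℕ => a + k / √(n : ℝ) * t) atTop (nhds a) := by
        have := ((hs.const_div_atTop k).mul_const t).const_add a
        simpa using this
      have l1 := (vm_log_limit (-(k * t / a))).const_mul a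
      have l2 := (vm_log_limit (k * t / (1 - a))).const_mul (1 - a)
      have l := (Real.continuous_exp.tendsto _).comp (l1.add l2)
      have hlim : a * -((-(k * t / a)) ^ 2 / 2) + (1 - a) * -((k * t / (1 - a)) ^ 2 / 2)
          = -t ^ 2 := by
        rw [neg_sq, div_pow, div_pow, mul_pow, hk2]
        field_simp
        ring
      rw [hlim] at l
      refine l.congr' ?_
      filter_upwards [hx.eventually (isOpen_Ioo.mem_nhds ha), eventually_gt_atTop 0] with n hn hn0
      have hnpos : (0 : ℝ) < n := by exact_mod_cast hn0
      have hq : 0 < √(n : ℝ) := Real.sqrt_pos.2 hnpos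
      rw [hgexp n _ hn]
      simp only [Function.comp]
      have e1 : (a + k / √(n : ℝ) * t) / a = 1 - -(k * t / a) / √(n : ℝ) := by
        field_simp
        ring
      have e2 : (1 - (a + k / √(n : ℝ) * t)) / (1 - a) = 1 - (k * t / (1 - a)) / √(n : ℝ) := by
        field_simp
        ring
      rw [e1, e2]
      congr 1
      have e3 : a * (-(k * t / a) / √(n : ℝ)) + (1 - a) * ((k * t / (1 - a)) / √(n : ℝ)) = 0 := by
        field_simp
        ring
      linear_combination (n : ℝ) * e3
  refine hmain.congr' ?_
  filter_upwards [eventually_gt_atTop 0] with n hn0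
  have hnpos : (0 : ℝ) < n := by exact_mod_cast hn0
  have hq : 0 < √(n : ℝ) := Real.sqrt_pos.2 hnpos
  rw [Measure.integral_comp_mul_left (fun y => g n (a + y)), integral_add_left_eq_self (g n) a,
    integral_indicator measurableSet_Ioo, intervalIntegral.integral_of_le zero_le_one,
    integral_Ioc_eq_integral_Ioo, Real.sqrt_div hnpos.le, inv_div,
    abs_of_pos (div_pos hq hkpos), smul_eq_mul]
end

section
/- Fix a ∈ (0,1), let r_n := √(n/(2a(1−a))), and let w_n(x) := x^{a n}(1−x)^{(1−a)n} / ∫_0^1 t^{a n}(1−t)^{(1−a)n} dt for x ∈ [0,1] (real exponents), extended by 0 outside [0,1]. Then for all −∞ ≤ x₁ < x₂ ≤ +∞, ∫_{a + x₁/r_n}^{a + x₂/r_n} w_n(x) dx converges to (1/√π) ∫_{x₁}^{x₂} e^{−u²} du as n → ∞. -/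
open MeasureTheory Filter Real

/-- Normalised binomial likelihood. -/
noncomputable def vmP (a : ℝ) (n : ℕ) (x : ℝ) : ℝ :=
  if x ∈ Set.Icc (0:ℝ) 1 then
    (x / a) ^ (a * (n : ℝ)) * ((1 - x) / (1 - a)) ^ ((1 - a) * (n : ℝ)) else 0

noncomputable def vmR (a : ℝ) (n : ℕ) : ℝ := Real.sqrt ((n : ℝ) / (2 * a * (1 - a)))

lemma vmP_meas (a : ℝ) (n : ℕ) : Measurable (vmP a n) := by
  unfold vmP
  refine Measurable.ite measurableSet_Icc ?_ measurable_const
  fun_prop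

lemma vmP_nonneg {a : ℝ} (ha : a ∈ Set.Ioo (0:ℝ) 1) (n : ℕ) (x : ℝ) : 0 ≤ vmP a n x := by
  unfold vmP
  split_ifs with h
  · have := ha.1
    have h1 : 0 < 1 - a := by linarith [ha.2]
    have h2 : 0 ≤ 1 - x := by linarith [h.2]
    have h3 := h.1
    positivity
  · exact le_rfl

lemma vm_rpow_le {a x : ℝ} (ha : 0 < a) (hx : 0 ≤ x) (m : ℝ) (hm : 0 ≤ m) :
    (x / a) ^ (a * m) ≤ exp (2 * m * (√x * √a - a)) := by
  have h1 : x / a ≤ exp (2 * (√(x / a) - 1)) := by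
    have h := Real.add_one_le_exp (√(x / a) - 1)
    have h' : √(x / a) ≤ exp (√(x / a) - 1) := by linarith
    calc x / a = √(x / a) ^ 2 := (Real.sq_sqrt (by positivity)).symm
      _ ≤ exp (√(x / a) - 1) ^ 2 := by gcongr
      _ = _ := by rw [← Real.exp_nat_mul]; norm_num
  calc (x / a) ^ (a * m) ≤ exp (2 * (√(x / a) - 1)) ^ (a * m) :=
        Real.rpow_le_rpow (by positivity) h1 (by positivity)
    _ = exp (2 * (√(x / a) - 1) * (a * m)) := by rw [← Real.exp_mul]
    _ = _ := by
      congr 1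
      have : √(x / a) * a = √x * √a := by
        rw [Real.sqrt_div hx]
        have h := Real.sq_sqrt ha.le
        have : 0 < √a := Real.sqrt_pos.2 ha
        field_simp
        rw [h]
      linear_combination 2 * m * this

lemma vm_sq {a x : ℝ} (ha : 0 ≤ a) (ha1 : a ≤ 1) (hx : 0 ≤ x) (hx1 : x ≤ 1) :
    (x - a) ^ 2 ≤ 4 * (√x - √a) ^ 2 := by
  have e1 := Real.sq_sqrt ha
  have e2 := Real.sq_sqrt hx
  have b1 : √a ≤ 1 := Real.sqrt_le_one.2 ha1
  have b2 : √x ≤ 1 := Real.sqrt_le_one.2 hx1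
  have p1 := Real.sqrt_nonneg a
  have p2 := Real.sqrt_nonneg x
  have : (x - a) ^ 2 = (√x + √a) ^ 2 * (√x - √a) ^ 2 := by
    rw [← mul_pow]; congr 1; linear_combination e1 - e2
  rw [this]
  have : (√x + √a) ^ 2 ≤ 4 := by nlinarith
  gcongr

lemma vmP_le {a : ℝ} (ha : a ∈ Set.Ioo (0:ℝ) 1) (n : ℕ) (x : ℝ) :
    vmP a n x ≤ exp (-(n * (x - a) ^ 2 / 2)) := by
  unfold vmP
  split_ifs with h
  · have h0 := ha.1
    have h1 : 0 < 1 - a := by linarith [ha.2]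
    have h2 : 0 ≤ 1 - x := by linarith [h.2]
    have h3 := h.1
    have A := vm_rpow_le h0 h3 n (by positivity)
    have B := vm_rpow_le h1 h2 n (by positivity)
    refine (mul_le_mul A B (by positivity) (by positivity)).trans ?_
    rw [← Real.exp_add, Real.exp_le_exp]
    have C := vm_sq h0.le ha.2.le h3 h.2
    have D := vm_sq h1.le (by linarith) h2 (by linarith)
    have e1 := Real.sq_sqrt h0.le
    have e2 := Real.sq_sqrt h3
    have e3 := Real.sq_sqrt h1.le
    have e4 := Real.sq_sqrt h2
    have hn : (0:ℝ) ≤ n := by positivity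
    have key : 2 * (√x * √a - a) + 2 * (√(1 - x) * √(1 - a) - (1 - a)) ≤ -((x - a) ^ 2 / 2) := by
      nlinarith
    have := mul_le_mul_of_nonneg_left key hn
    linarith
  · positivity

lemma vmR_sq {a : ℝ} (ha : a ∈ Set.Ioo (0:ℝ) 1) (n : ℕ) :
    vmR a n ^ 2 = (n : ℝ) / (2 * a * (1 - a)) := by
  have h0 := ha.1
  have h1 : 0 < 1 - a := by linarith [ha.2]
  exact Real.sq_sqrt (by positivity)

lemma vmR_pos {a : ℝ} (ha : a ∈ Set.Ioo (0:ℝ) 1) {n : ℕ} (hn : 0 < n) : 0 < vmR a n := by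
  have h0 := ha.1
  have h1 : 0 < 1 - a := by linarith [ha.2]
  exact Real.sqrt_pos.2 (by positivity)

lemma vmR_tendsto {a : ℝ} (ha : a ∈ Set.Ioo (0:ℝ) 1) : Tendsto (vmR a) atTop atTop := by
  have h0 := ha.1
  have h1 : 0 < 1 - a := by linarith [ha.2]
  exact Real.tendsto_sqrt_atTop.comp
    (tendsto_natCast_atTop_atTop.atTop_div_const (by positivity))

lemma vm_log_lim (h : ℕ → ℝ) (c : ℝ) (h0 : Tendsto h atTop (nhds 0))
    (hc : Tendsto (fun n : ℕ => (n : ℝ) * h n ^ 2) atTop (nhds c)) :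
    Tendsto (fun n : ℕ => (n : ℝ) * (log (1 + h n) - h n)) atTop (nhds (-c / 2)) := by
  have habs : Tendsto (fun n => |h n|) atTop (nhds 0) := by simpa using h0.abs
  have hE : Tendsto (fun n : ℕ => (n : ℝ) * (log (1 + h n) - h n + h n ^ 2 / 2)) atTop (nhds 0) := by
    have hb : Tendsto (fun n : ℕ => (n : ℝ) * h n ^ 2 * (|h n| / (1 - |h n|))) atTop (nhds 0) := by
      have : Tendsto (fun n => |h n| / (1 - |h n|)) atTop (nhds (0 / (1 - 0))) :=
        habs.div (tendsto_const_nhds.sub habs) (by norm_num)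
      simpa using hc.mul this
    refine squeeze_zero_norm' ?_ hb
    filter_upwards [habs.eventually (gt_mem_nhds (show (0:ℝ) < 1 by norm_num))] with n hn
    have := Real.abs_log_sub_add_sum_range_le (x := -h n) (by simpa using hn) 2
    simp only [Finset.sum_range_succ, Finset.sum_range_zero, abs_neg, sub_neg_eq_add] at this
    rw [Real.norm_eq_abs, abs_mul, Nat.abs_cast, mul_assoc]
    gcongr
    have e1 : log (1 + h n) - h n + h n ^ 2 / 2 = 0 + (-h n) ^ (0 + 1) / (((0 : ℕ) : ℝ) + 1)
        + (-h n) ^ (1 + 1) / (((1 : ℕ) : ℝ) + 1) + log (1 + h n) := by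
      norm_num; ring
    have e2 : h n ^ 2 * (|h n| / (1 - |h n|)) = |h n| ^ (2 + 1) / (1 - |h n|) := by
      rw [← sq_abs (h n)]; ring
    rw [e1, e2]
    exact this
  have := hE.sub (hc.div_const 2)
  refine (this.congr fun n => by ring).trans (by rw [zero_sub, neg_div])

lemma vmP_lim {a : ℝ} (ha : a ∈ Set.Ioo (0:ℝ) 1) (u : ℝ) :
    Tendsto (fun n => vmP a n (a + u / vmR a n)) atTop (nhds (exp (-u ^ 2))) := by
  have h0 := ha.1
  have h1 : 0 < 1 - a := by linarith [ha.2]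
  have hz : Tendsto (fun n => u / vmR a n) atTop (nhds 0) :=
    (vmR_tendsto ha).const_div_atTop u
  have hsq : ∀ b : ℝ, b ≠ 0 → Tendsto (fun n : ℕ => (n : ℝ) * (u / vmR a n / b) ^ 2) atTop
      (nhds (2 * a * (1 - a) * u ^ 2 / b ^ 2)) := by
    intro b hb
    refine tendsto_const_nhds.congr' ?_
    filter_upwards [eventually_gt_atTop 0] with n hn
    have hn' : (n : ℝ) ≠ 0 := by positivity
    rw [div_pow, div_pow, vmR_sq ha]
    field_simp
  have hzd : ∀ b : ℝ, Tendsto (fun n => u / vmR a n / b) atTop (nhds 0) := fun b => by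
    simpa using hz.div_const b
  have L1 := (vm_log_lim _ _ (hzd a) (hsq a h0.ne')).const_mul a
  have L2 := (vm_log_lim _ _ (hzd (-(1 - a))) (hsq _ (neg_ne_zero.2 h1.ne'))).const_mul (1 - a)
  have L := (Real.continuous_exp.tendsto _).comp (L1.add L2)
  have hlim : a * (-(2 * a * (1 - a) * u ^ 2 / a ^ 2) / 2) +
      (1 - a) * (-(2 * a * (1 - a) * u ^ 2 / (-(1 - a)) ^ 2) / 2) = -u ^ 2 := by
    field_simp; ring
  rw [hlim] at L
  refine L.congr' ?_
  have hx : Tendsto (fun n => a + u / vmR a n) atTop (nhds a) := by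
    simpa using tendsto_const_nhds.add hz
  filter_upwards [hx.eventually (Ioo_mem_nhds h0 ha.2)] with n hn
  obtain ⟨hn0, hn1⟩ := hn
  have e1 : (a + u / vmR a n) / a = 1 + u / vmR a n / a := by
    rw [add_div, div_self h0.ne']
  have e2 : (1 - (a + u / vmR a n)) / (1 - a) = 1 + u / vmR a n / (-(1 - a)) := by
    rw [div_neg]; rw [eq_comm, eq_div_iff h1.ne', add_mul, neg_mul, div_mul_cancel₀ _ h1.ne']; ring
  have p1 : 0 < (a + u / vmR a n) / a := by positivity
  have p2 : 0 < (1 - (a + u / vmR a n)) / (1 - a) := div_pos (by linarith) h1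
  unfold vmP
  rw [if_pos ⟨hn0.le, hn1.le⟩, Real.rpow_def_of_pos p1, Real.rpow_def_of_pos p2, ← Real.exp_add,
    e1, e2]
  simp only [Function.comp]
  congr 1
  have e3 : a * (u / vmR a n / a) + (1 - a) * (u / vmR a n / (-(1 - a))) = 0 := by
    rw [div_neg, mul_neg, mul_div_cancel₀ _ h0.ne', mul_div_cancel₀ _ h1.ne']; ring
  linear_combination (-(n:ℝ)) * e3

lemma vm_core {a : ℝ} (ha : a ∈ Set.Ioo (0:ℝ) 1) (S : Set ℝ) :
    Tendsto (fun n => ∫ u in S, vmP a n (a + u / vmR a n)) atTop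
      (nhds (∫ u in S, exp (-u ^ 2))) := by
  have h0 := ha.1
  have h1 : 0 < 1 - a := by linarith [ha.2]
  refine tendsto_integral_filter_of_dominated_convergence
    (fun u => exp (-(a * (1 - a)) * u ^ 2)) ?_ ?_ ?_ ?_
  · refine Eventually.of_forall fun n => ?_
    exact ((vmP_meas a n).comp (by fun_prop)).aestronglyMeasurable
  · filter_upwards [eventually_gt_atTop 0] with n hn
    refine Eventually.of_forall fun u => ?_
    rw [Real.norm_of_nonneg (vmP_nonneg ha _ _)]
    refine (vmP_le ha _ _).trans (le_of_eq ?_)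
    congr 1
    have hn' : (n : ℝ) ≠ 0 := by positivity
    rw [add_sub_cancel_left, div_pow, vmR_sq ha]
    field_simp
  · exact (integrable_exp_neg_mul_sq (by positivity)).integrableOn
  · exact Eventually.of_forall fun u => vmP_lim ha u

lemma vm_change {a : ℝ} (ha : a ∈ Set.Ioo (0:ℝ) 1) {n : ℕ} (hn : 0 < n) (S : Set ℝ)
    (hS : MeasurableSet S) :
    ∫ x in {x | vmR a n * (x - a) ∈ S}, vmP a n x =
      (vmR a n)⁻¹ * ∫ u in S, vmP a n (a + u / vmR a n) := by
  have hr := vmR_pos ha hn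
  have hS' : MeasurableSet {x | vmR a n * (x - a) ∈ S} :=
    hS.preimage (by fun_prop)
  rw [← integral_indicator hS, ← integral_indicator hS']
  have h := Measure.integral_comp_mul_left
    (S.indicator fun u => vmP a n (a + u / vmR a n)) (vmR a n)
  rw [abs_of_pos (inv_pos.2 hr), smul_eq_mul] at h
  rw [← h, ← integral_sub_right_eq_self
    (fun x => S.indicator (fun u => vmP a n (a + u / vmR a n)) (vmR a n * x)) a]
  congr 1
  ext x
  have e : a + vmR a n * (x - a) / vmR a n = x := by
    rw [mul_div_cancel_left₀ _ hr.ne']; ring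
  by_cases hx : vmR a n * (x - a) ∈ S
  · rw [Set.indicator_of_mem hx, Set.indicator_of_mem (show x ∈ {x | vmR a n * (x - a) ∈ S} from hx), e]
  · rw [Set.indicator_of_notMem hx,
      Set.indicator_of_notMem (show x ∉ {x | vmR a n * (x - a) ∈ S} from hx)]

theorem vonMises_binomial_uniform_prior (a : ℝ) (ha : a ∈ Set.Ioo (0:ℝ) 1)
    (x₁ x₂ : EReal) (h12 : x₁ < x₂) :
    Tendsto (fun n : ℕ =>
      ∫ x in {x : ℝ | x₁ < ((Real.sqrt ((n : ℝ) / (2 * a * (1 - a))) * (x - a) : ℝ) : EReal) ∧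
                      ((Real.sqrt ((n : ℝ) / (2 * a * (1 - a))) * (x - a) : ℝ) : EReal) < x₂},
        (if x ∈ Set.Icc (0:ℝ) 1 then
          x ^ (a * (n : ℝ)) * (1 - x) ^ ((1 - a) * (n : ℝ)) /
            ∫ t in (0:ℝ)..1, t ^ (a * (n : ℝ)) * (1 - t) ^ ((1 - a) * (n : ℝ))
        else 0))
      atTop
      (nhds ((1 / Real.sqrt π) *
        ∫ u in {u : ℝ | x₁ < (u : EReal) ∧ (u : EReal) < x₂}, Real.exp (-u ^ 2))) := by
  have h0 := ha.1
  have h1 : 0 < 1 - a := by linarith [ha.2]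
  set S : Set ℝ := {u : ℝ | x₁ < (u : EReal) ∧ (u : EReal) < x₂} with hSdef
  have hS : MeasurableSet S :=
    (measurableSet_Ioo (a := x₁) (b := x₂)).preimage measurable_coe_real_ereal
  have T1 := vm_core ha S
  have T2 := vm_core ha Set.univ
  have hG : ∫ u in Set.univ, exp (-u ^ 2) = √π := by
    have := integral_gaussian 1
    simpa using this
  rw [hG] at T2
  have T := T1.div T2 (by positivity)
  have hlim : (∫ u in S, exp (-u ^ 2)) / √π = 1 / √π * ∫ u in S, exp (-u ^ 2) := by ring
  rw [hlim] at T
  refine T.congr' ?_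
  filter_upwards [eventually_gt_atTop 0] with n hn
  have hr := vmR_pos ha hn
  set M : ℝ := a ^ (a * (n : ℝ)) * (1 - a) ^ ((1 - a) * (n : ℝ)) with hM
  have hMpos : 0 < M := by positivity
  have hp : ∀ x ∈ Set.Icc (0:ℝ) 1, x ^ (a * (n : ℝ)) * (1 - x) ^ ((1 - a) * (n : ℝ))
      = M * vmP a n x := by
    intro x hx
    unfold vmP
    rw [if_pos hx, Real.div_rpow hx.1 h0.le, Real.div_rpow (by linarith [hx.2]) h1.le, hM]
    have := Real.rpow_pos_of_pos h0 (a * (n : ℝ))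
    have := Real.rpow_pos_of_pos h1 ((1 - a) * (n : ℝ))
    field_simp
  have hZ : ∫ t in (0:ℝ)..1, t ^ (a * (n : ℝ)) * (1 - t) ^ ((1 - a) * (n : ℝ))
      = M * ((vmR a n)⁻¹ * ∫ u in Set.univ, vmP a n (a + u / vmR a n)) := by
    rw [← vm_change ha hn _ MeasurableSet.univ, intervalIntegral.integral_of_le zero_le_one,
      ← integral_Icc_eq_integral_Ioc, setIntegral_congr_fun measurableSet_Icc hp,
      integral_const_mul]
    congr 1
    simp only [Set.mem_univ, Set.ofPred_true, Measure.restrict_univ]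
    refine setIntegral_eq_integral_of_forall_compl_eq_zero fun x hx => ?_
    unfold vmP
    rw [if_neg hx]
  have hN : ∀ Z : ℝ, (fun x : ℝ => if x ∈ Set.Icc (0:ℝ) 1 then
          x ^ (a * (n : ℝ)) * (1 - x) ^ ((1 - a) * (n : ℝ)) / Z else 0) =
      fun x => (M / Z) * vmP a n x := by
    intro Z
    ext x
    split_ifs with hx
    · rw [hp x hx]; ring
    · unfold vmP; rw [if_neg hx, mul_zero]
  rw [hN, integral_const_mul, hZ]
  have hC := vm_change ha hn S hS
  have alg : ∀ A B r M : ℝ, 0 < r → 0 < M →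
      A / B = M / (M * (r⁻¹ * B)) * (r⁻¹ * A) := by
    intro A B r M hr hM
    rcases eq_or_ne B 0 with rfl | hB
    · simp
    · field_simp
  refine (alg _ _ _ _ hr hMpos).trans ?_
  congr 1
  exact hC.symm
end

section
/- Fix a ∈ (0,1) and let r_n := √(n/(2a(1−a))). Let ψ : [0,1] → [0,∞) be continuous with ψ(a) > 0. Then for all −∞ ≤ x₁ < x₂ ≤ +∞, (∫ over (a + x₁/r_n, a + x₂/r_n) ∩ [0,1] of ψ(x) x^{a n}(1−x)^{(1−a)n} dx) / (∫_0^1 ψ(x) x^{a n}(1−x)^{(1−a)n} dx) converges to (1/√π) ∫_{x₁}^{x₂} e^{−u²} du as n → ∞ (the exponents a n and (1−a)n being real). -/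
open MeasureTheory Filter Real

/-- Second-order expansion of the logarithm along a sequence tending to infinity. -/
lemma vm_log_aux (r : ℕ → ℝ) (hr : Tendsto r atTop atTop) (y : ℝ) :
    Tendsto (fun n => r n ^ 2 * (Real.log (1 + y / r n) - y / r n)) atTop (nhds (-y ^ 2 / 2)) := by
  have h0 : Tendsto (fun n => -y / r n) atTop (nhds 0) := hr.const_div_atTop (-y)
  have h0' : Tendsto (fun n => |(-y / r n)|) atTop (nhds 0) := by simpa using h0.abs
  have hlt : ∀ᶠ n in atTop, |(-y / r n)| < 1 := h0'.eventually (gt_mem_nhds one_pos)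
  have hb : Tendsto (fun n => y ^ 2 * (|(-y / r n)| / (1 - |(-y / r n)|))) atTop (nhds 0) := by
    have := (h0'.div (tendsto_const_nhds.sub h0' : Tendsto (fun n => (1:ℝ) - |(-y / r n)|) atTop
      (nhds (1 - 0))) (by norm_num)).const_mul (y ^ 2)
    simpa using this
  have hs := squeeze_zero_norm' (f := fun n =>
    r n ^ 2 * (Real.log (1 + y / r n) - y / r n) + y ^ 2 / 2) ?_ hb
  · have := hs.sub_const (y ^ 2 / 2)
    refine (this.congr fun n => ?_).trans (le_of_eq ?_)
    · ring
    · congr 1; ring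
  · filter_upwards [hlt, hr.eventually_gt_atTop 0] with n hn hrn
    have h := Real.abs_log_sub_add_sum_range_le hn 2
    have e : r n ^ 2 * (Real.log (1 + y / r n) - y / r n) + y ^ 2 / 2
      = r n ^ 2 * ((∑ i ∈ Finset.range 2, (-y / r n) ^ (i + 1) / ((i:ℝ) + 1))
          + Real.log (1 - -y / r n)) := by
      rw [show 1 - -y / r n = 1 + y / r n by ring]
      simp only [Finset.sum_range_succ, Finset.sum_range_zero]
      push_cast
      field_simp
      ring
    rw [e, Real.norm_eq_abs, abs_mul, abs_of_nonneg (sq_nonneg (r n))]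
    refine (mul_le_mul_of_nonneg_left h (sq_nonneg _)).trans (le_of_eq ?_)
    have : r n ^ 2 * |(-y / r n)| ^ 2 = y ^ 2 := by
      rw [sq_abs]; field_simp
    calc r n ^ 2 * (|(-y / r n)| ^ (2 + 1) / (1 - |(-y / r n)|))
        = (r n ^ 2 * |(-y / r n)| ^ 2) * (|(-y / r n)| / (1 - |(-y / r n)|)) := by ring
      _ = _ := by rw [this]

/-- Pinsker-type bound. -/
lemma vm_pinsker (a : ℝ) (ha : a ∈ Set.Ioo (0:ℝ) 1) (x : ℝ) (hx : x ∈ Set.Ioo (0:ℝ) 1) :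
    a * Real.log x + (1 - a) * Real.log (1 - x) + 2 * (x - a) ^ 2
      ≤ a * Real.log a + (1 - a) * Real.log (1 - a) := by
  obtain ⟨ha0, ha1⟩ := ha
  obtain ⟨hx0, hx1⟩ := hx
  set h : ℝ → ℝ := fun x => a * Real.log x + (1 - a) * Real.log (1 - x) + 2 * (x - a) ^ 2 with hh
  have hd : ∀ y ∈ Set.Ioo (0:ℝ) 1, HasDerivAt h ((a - y) * (1 / (y * (1 - y)) - 4)) y := by
    intro y ⟨hy0, hy1⟩
    have h1 := (Real.hasDerivAt_log hy0.ne').const_mul a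
    have h2 := (((hasDerivAt_id y).const_sub 1).log (by simp; linarith)).const_mul (1 - a)
    have h3 := ((((hasDerivAt_id y).sub_const a).pow 2)).const_mul 2
    refine ((h1.add h2).add h3).congr_deriv ?_
    have : 1 - y ≠ 0 := by linarith
    simp
    field_simp
    ring
  have hnn : ∀ y ∈ Set.Ioo (0:ℝ) 1, 0 ≤ 1 / (y * (1 - y)) - 4 := by
    intro y ⟨hy0, hy1⟩
    rw [sub_nonneg, le_div_iff₀ (by nlinarith)]
    nlinarith [sq_nonneg (2 * y - 1)]
  have key : h x ≤ h a := by
    rcases le_total x a with hxa | hxa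
    · have hm : MonotoneOn h (Set.Icc x a) := by
        have hsub : ∀ y ∈ Set.Icc x a, y ∈ Set.Ioo (0:ℝ) 1 := fun y hy =>
          ⟨by linarith [hy.1], by linarith [hy.2]⟩
        refine monotoneOn_of_hasDerivWithinAt_nonneg (convex_Icc x a)
          (fun y hy => (hd y (hsub y hy)).continuousAt.continuousWithinAt)
          (fun y hy => (hd y (hsub y (interior_subset hy))).hasDerivWithinAt) ?_
        intro y hy
        have hy := interior_subset hy
        exact mul_nonneg (by linarith [hy.2]) (hnn y (hsub y hy))
      exact hm ⟨le_rfl, hxa⟩ ⟨hxa, le_rfl⟩ hxa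
    · have hm : AntitoneOn h (Set.Icc a x) := by
        have hsub : ∀ y ∈ Set.Icc a x, y ∈ Set.Ioo (0:ℝ) 1 := fun y hy =>
          ⟨by linarith [hy.1], by linarith [hy.2]⟩
        refine antitoneOn_of_hasDerivWithinAt_nonpos (convex_Icc a x)
          (fun y hy => (hd y (hsub y hy)).continuousAt.continuousWithinAt)
          (fun y hy => (hd y (hsub y (interior_subset hy))).hasDerivWithinAt) ?_
        intro y hy
        have hy := interior_subset hy
        exact mul_nonpos_of_nonpos_of_nonneg (by linarith [hy.1]) (hnn y (hsub y hy))
      exact hm ⟨le_rfl, hxa⟩ ⟨hxa, le_rfl⟩ hxa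
  simpa [hh] using key

/-- The likelihood kernel in exponential form. -/
lemma vm_kernel_eq (a x s : ℝ) (hx : x ∈ Set.Ioo (0:ℝ) 1) :
    x ^ (a * s) * (1 - x) ^ ((1 - a) * s)
      = Real.exp (s * (a * Real.log x + (1 - a) * Real.log (1 - x))) := by
  rw [Real.rpow_def_of_pos hx.1, Real.rpow_def_of_pos (by linarith [hx.2]), ← Real.exp_add]
  congr 1; ring

lemma vm_r_tendsto (a : ℝ) (ha : a ∈ Set.Ioo (0:ℝ) 1) :
    Tendsto (fun n : ℕ => Real.sqrt ((n : ℝ) / (2 * a * (1 - a)))) atTop atTop := by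
  have : 0 < 2 * a * (1 - a) := by have := ha.1; have := ha.2; apply mul_pos <;> linarith
  exact Real.tendsto_sqrt_atTop.comp (tendsto_natCast_atTop_atTop.atTop_div_const this)

lemma vm_kernel_bound (a : ℝ) (ha : a ∈ Set.Ioo (0:ℝ) 1) (n : ℕ) (hn : 0 < n) (x : ℝ)
    (hx : x ∈ Set.Icc (0:ℝ) 1) :
    x ^ (a * (n:ℝ)) * (1 - x) ^ ((1 - a) * (n:ℝ)) / (a ^ (a * (n:ℝ)) * (1 - a) ^ ((1 - a) * (n:ℝ)))
      ≤ Real.exp (-(2 * n * (x - a) ^ 2)) := by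
  have hn' : (0:ℝ) < n := by exact_mod_cast hn
  have ha1 : 0 < 1 - a := by linarith [ha.2]
  rcases eq_or_lt_of_le hx.1 with h0 | h0
  · rw [← h0, Real.zero_rpow (mul_pos ha.1 hn').ne']
    simp; positivity
  rcases eq_or_lt_of_le hx.2 with h1 | h1
  · rw [h1, sub_self, Real.zero_rpow (mul_pos ha1 hn').ne']
    simp; positivity
  rw [vm_kernel_eq a x n ⟨h0, h1⟩, vm_kernel_eq a a n ha, ← Real.exp_sub]
  apply Real.exp_le_exp.2
  have := mul_le_mul_of_nonneg_left (vm_pinsker a ha x ⟨h0, h1⟩) hn'.le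
  linarith

lemma vm_kernel_lim (a : ℝ) (ha : a ∈ Set.Ioo (0:ℝ) 1) (r : ℕ → ℝ) (hr : Tendsto r atTop atTop)
    (hrn : ∀ n : ℕ, (n:ℝ) = 2 * a * (1 - a) * r n ^ 2) (u : ℝ)
    (hmem : ∀ᶠ n in atTop, a + u / r n ∈ Set.Ioo (0:ℝ) 1) :
    Tendsto (fun n : ℕ => (a + u / r n) ^ (a * (n:ℝ)) * (1 - (a + u / r n)) ^ ((1 - a) * (n:ℝ))
      / (a ^ (a * (n:ℝ)) * (1 - a) ^ ((1 - a) * (n:ℝ)))) atTop (nhds (Real.exp (-u ^ 2))) := by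
  have ha0 := ha.1
  have ha1 : 0 < 1 - a := by linarith [ha.2]
  have h1 := (vm_log_aux r hr (u / a)).const_mul (2 * a * (1 - a) * a)
  have h2 := (vm_log_aux r hr (-u / (1 - a))).const_mul (2 * a * (1 - a) * (1 - a))
  have h3 := (Real.continuous_exp.tendsto _).comp (h1.add h2)
  have e : 2 * a * (1 - a) * a * (-(u / a) ^ 2 / 2)
      + 2 * a * (1 - a) * (1 - a) * (-(-u / (1 - a)) ^ 2 / 2) = -u ^ 2 := by
    field_simp; ring
  rw [e] at h3
  refine h3.congr' ?_
  filter_upwards [hmem, hr.eventually_gt_atTop 0] with n hn hr0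
  rw [vm_kernel_eq a _ n hn, vm_kernel_eq a a n ha, ← Real.exp_sub]
  have l1 : Real.log (a + u / r n) = Real.log a + Real.log (1 + u / a / r n) := by
    rw [← Real.log_mul ha0.ne']
    · congr 1; field_simp
    · intro h
      have : a + u / r n = a * (1 + u / a / r n) := by field_simp
      rw [h] at this
      linarith [hn.1]
  have l2 : Real.log (1 - (a + u / r n)) = Real.log (1 - a) + Real.log (1 + -u / (1 - a) / r n) := by
    have : 1 - (a + u / r n) = (1 - a) * (1 + -u / (1 - a) / r n) := by field_simp; ring
    rw [← Real.log_mul ha1.ne', this]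
    intro h
    rw [h] at this
    linarith [hn.2]
  simp only [Function.comp]
  rw [l1, l2, hrn n]
  congr 1
  field_simp
  ring

lemma vm_key (a : ℝ) (ha : a ∈ Set.Ioo (0:ℝ) 1)
    (ψ : ℝ → ℝ) (hψ_cont : ContinuousOn ψ (Set.Icc (0:ℝ) 1))
    (S : Set ℝ) (hS : MeasurableSet S) :
    Tendsto (fun n : ℕ =>
      Real.sqrt ((n : ℝ) / (2 * a * (1 - a))) / (a ^ (a * (n:ℝ)) * (1 - a) ^ ((1 - a) * (n:ℝ))) *
      (∫ x in {x : ℝ | Real.sqrt ((n : ℝ) / (2 * a * (1 - a))) * (x - a) ∈ S} ∩ Set.Icc (0:ℝ) 1,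
          ψ x * (x ^ (a * (n : ℝ)) * (1 - x) ^ ((1 - a) * (n : ℝ)))))
      atTop (nhds (ψ a * ∫ u in S, Real.exp (-u ^ 2))) := by
  have ha0 := ha.1
  have ha1 : 0 < 1 - a := by linarith [ha.2]
  have hr := vm_r_tendsto a ha
  set r : ℕ → ℝ := fun n => Real.sqrt ((n : ℝ) / (2 * a * (1 - a))) with hrdef
  have hrn : ∀ n : ℕ, (n:ℝ) = 2 * a * (1 - a) * r n ^ 2 := by
    intro n
    rw [hrdef]; simp only
    rw [Real.sq_sqrt (by positivity)]
    field_simp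
  set c : ℕ → ℝ := fun n => a ^ (a * (n:ℝ)) * (1 - a) ^ ((1 - a) * (n:ℝ)) with hc
  have hcpos : ∀ n, 0 < c n := fun n => by simp only [hc]; positivity
  set f : ℕ → ℝ → ℝ := fun n x => ψ x * (x ^ (a * (n : ℝ)) * (1 - x) ^ ((1 - a) * (n : ℝ))) with hf
  set Φ : ℕ → ℝ → ℝ := fun n => (Set.Icc (0:ℝ) 1).indicator (f n) with hΦ
  have hfc : ∀ n, ContinuousOn (f n) (Set.Icc (0:ℝ) 1) := by
    intro n
    refine hψ_cont.mul (ContinuousOn.mul ?_ ?_)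
    · exact continuousOn_id.rpow_const (fun x _ => Or.inr (by positivity))
    · exact (continuousOn_const.sub continuousOn_id).rpow_const (fun x _ => Or.inr (by positivity))
  have hΦm : ∀ n, Measurable (Φ n) := by
    intro n
    have := (hfc n).measurable_piecewise (continuousOn_const (c := (0:ℝ))) measurableSet_Icc
    classical
    rw [hΦ]; simp only
    rw [← Set.piecewise_eq_indicator]
    convert this using 1
    congr
  -- bound of ψ
  obtain ⟨M, hM⟩ := isCompact_Icc.exists_bound_of_continuousOn hψ_cont
  have hM0 : 0 ≤ M := (norm_nonneg _).trans (hM a ⟨ha.1.le, ha.2.le⟩)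
  -- dominated convergence
  have hlim : Tendsto (fun n => ∫ u in S, Φ n (a + u / r n) / c n) atTop
      (nhds (∫ u in S, ψ a * Real.exp (-u ^ 2))) := by
    refine tendsto_integral_filter_of_dominated_convergence
      (fun u => M * Real.exp (-(4 * a * (1 - a)) * u ^ 2)) ?_ ?_ ?_ ?_
    · refine Eventually.of_forall fun n => Measurable.aestronglyMeasurable ?_
      exact ((hΦm n).comp (by fun_prop)).div_const _
    · filter_upwards [eventually_gt_atTop 0, hr.eventually_gt_atTop 0] with n hn hr0
      refine Eventually.of_forall fun u => ?_
      by_cases hx : a + u / r n ∈ Set.Icc (0:ℝ) 1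
      · simp only [hΦ, Set.indicator_of_mem hx, hf]
        rw [mul_div_assoc, norm_mul]
        refine mul_le_mul (hM _ hx) ?_ (norm_nonneg _) hM0
        rw [Real.norm_of_nonneg]
        · refine (vm_kernel_bound a ha n hn _ hx).trans (le_of_eq ?_)
          congr 1
          have hr0 : 0 < r n := hr0
          rw [hrn n]
          field_simp
          ring
        · have := hx.1
          have : 0 ≤ 1 - (a + u / r n) := by linarith [hx.2]
          have := hcpos n
          positivity
      · simp only [hΦ, Set.indicator_of_notMem hx]
        simp; positivity
    · exact ((integrable_exp_neg_mul_sq (by positivity)).const_mul M).integrableOn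
    · refine Eventually.of_forall fun u => ?_
      have hx : Tendsto (fun n => a + u / r n) atTop (nhds a) := by
        simpa using (hr.const_div_atTop u).const_add a
      have hmem : ∀ᶠ n in atTop, a + u / r n ∈ Set.Ioo (0:ℝ) 1 :=
        hx.eventually (isOpen_Ioo.mem_nhds ha)
      have h1 : Tendsto (fun n => ψ (a + u / r n)) atTop (nhds (ψ a)) :=
        ((hψ_cont.continuousAt (Icc_mem_nhds ha.1 ha.2)).tendsto).comp hx
      refine (h1.mul (vm_kernel_lim a ha r hr hrn u hmem)).congr' ?_
      filter_upwards [hmem] with n hn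
      simp only [hΦ, Set.indicator_of_mem (Set.Ioo_subset_Icc_self hn), hf, hc]
      ring
  rw [integral_const_mul] at hlim
  refine hlim.congr' ?_
  filter_upwards [hr.eventually_gt_atTop 0] with n hr0
  have hr0 : 0 < r n := hr0
  have hSn : MeasurableSet {x : ℝ | r n * (x - a) ∈ S} :=
    (show Measurable (fun x : ℝ => r n * (x - a)) by fun_prop) hS
  change _ = r n / c n * ∫ x in {x : ℝ | r n * (x - a) ∈ S} ∩ Set.Icc (0:ℝ) 1, f n x
  rw [← setIntegral_indicator measurableSet_Icc, ← integral_indicator hSn, integral_div,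
    ← integral_indicator hS]
  have e1 : ∀ u, S.indicator (fun u => Φ n (a + u / r n)) u
      = (fun x => {x : ℝ | r n * (x - a) ∈ S}.indicator (Φ n) (a + x)) (u / r n) := by
    intro u
    have : r n * (a + u / r n - a) = u := by field_simp; ring
    have hiff : a + u / r n ∈ {x : ℝ | r n * (x - a) ∈ S} ↔ u ∈ S := by
      change r n * (a + u / r n - a) ∈ S ↔ u ∈ S
      rw [this]
    by_cases hu : u ∈ S
    · simp only [Set.indicator_of_mem hu, Set.indicator_of_mem (hiff.2 hu)]
    · simp only [Set.indicator_of_notMem hu, Set.indicator_of_notMem (fun h => hu (hiff.1 h))]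
  simp_rw [e1]
  rw [Measure.integral_comp_div (fun x => {x : ℝ | r n * (x - a) ∈ S}.indicator (Φ n) (a + x)),
    integral_add_left_eq_self, abs_of_pos hr0, smul_eq_mul]
  ring

/-- Von Mises's 1919 Bernstein–von Mises theorem for the binomial model with a
general prior density `ψ` and constant relative frequency `a`: the posterior of
the success probability, centered at `a` and scaled by `r_n = √(n/(2a(1−a)))`,
is asymptotically normal, independently of `ψ`. The integration interval
`(a + x₁/r_n, a + x₂/r_n) ∩ [0,1]` (with possibly infinite endpoints) is
encoded via `{x | x₁ < r_n(x−a) < x₂}` in `EReal`. -/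
theorem vonMises_binomial_general_prior (a : ℝ) (ha : a ∈ Set.Ioo (0:ℝ) 1)
    (ψ : ℝ → ℝ) (hψ_cont : ContinuousOn ψ (Set.Icc (0:ℝ) 1))
    (hψ_nonneg : ∀ x ∈ Set.Icc (0:ℝ) 1, 0 ≤ ψ x) (hψ_pos : 0 < ψ a)
    (x₁ x₂ : EReal) (h12 : x₁ < x₂) :
    Tendsto (fun n : ℕ =>
      (∫ x in {x : ℝ | x₁ < ((Real.sqrt ((n : ℝ) / (2 * a * (1 - a))) * (x - a) : ℝ) : EReal) ∧
                       ((Real.sqrt ((n : ℝ) / (2 * a * (1 - a))) * (x - a) : ℝ) : EReal) < x₂} ∩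
              Set.Icc (0:ℝ) 1,
          ψ x * (x ^ (a * (n : ℝ)) * (1 - x) ^ ((1 - a) * (n : ℝ)))) /
      (∫ x in (0:ℝ)..1, ψ x * (x ^ (a * (n : ℝ)) * (1 - x) ^ ((1 - a) * (n : ℝ)))))
      atTop
      (nhds ((1 / Real.sqrt π) *
        ∫ u in {u : ℝ | x₁ < (u : EReal) ∧ (u : EReal) < x₂}, Real.exp (-u ^ 2))) := by
  have ha0 := ha.1
  have ha1 : 0 < 1 - a := by linarith [ha.2]
  have hS : MeasurableSet {u : ℝ | x₁ < (u : EReal) ∧ (u : EReal) < x₂} :=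
    (measurableSet_lt measurable_const measurable_coe_real_ereal).inter
      (measurableSet_lt measurable_coe_real_ereal measurable_const)
  have h1 := vm_key a ha ψ hψ_cont _ hS
  have h2 := vm_key a ha ψ hψ_cont Set.univ MeasurableSet.univ
  have hg : ∫ u : ℝ, Real.exp (-u ^ 2) = Real.sqrt π := by
    simpa using integral_gaussian 1
  rw [setIntegral_univ, hg] at h2
  have hpi : 0 < Real.sqrt π := Real.sqrt_pos.2 Real.pi_pos
  have h3 := h1.div h2 (mul_pos hψ_pos hpi).ne'
  have e : ψ a * (∫ u in {u : ℝ | x₁ < (u : EReal) ∧ (u : EReal) < x₂}, Real.exp (-u ^ 2)) /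
      (ψ a * Real.sqrt π) = (1 / Real.sqrt π) *
        ∫ u in {u : ℝ | x₁ < (u : EReal) ∧ (u : EReal) < x₂}, Real.exp (-u ^ 2) := by
    rw [mul_div_mul_left _ _ hψ_pos.ne']; ring
  rw [e] at h3
  refine h3.congr' ?_
  filter_upwards [(vm_r_tendsto a ha).eventually_gt_atTop 0] with n hr0
  have hcpos : 0 < a ^ (a * (n:ℝ)) * (1 - a) ^ ((1 - a) * (n:ℝ)) := by positivity
  simp only [Pi.div_apply]
  rw [mul_div_mul_left _ _ (div_pos hr0 hcpos).ne']
  congr 1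
  rw [intervalIntegral.integral_of_le zero_le_one, ← integral_Icc_eq_integral_Ioc]
  simp
end

section
/- Let t ≥ 2, let a₁, …, a_t ∈ (0,1) with a₁ + ⋯ + a_t = 1, write a := (a₁, …, a_{t−1}) ∈ ℝ^{t−1}, and let Δ := {x ∈ ℝ^{t−1} : x_i > 0 for all i and x₁ + ⋯ + x_{t−1} < 1}. Define g on Δ by g(x) := ∏_{i=1}^{t−1} (x_i/a_i)^{a_i} · ((1 − x₁ − ⋯ − x_{t−1})/a_t)^{a_t} and g := 0 outside Δ. Let ψ : ℝ^{t−1} → [0,∞) be bounded, measurable, continuous at a, with ψ(a) > 0. Let H be the (t−1)×(t−1) matrix with entries h^{ij} = 1/(2a_t) for i ≠ j and h^{ii} = (1/2)(1/a_i + 1/a_t). Then for every z ∈ ℝ^{t−1}, (∫ over {x ∈ Δ : x_i ≤ a_i + z_i/√n for all i} of ψ(x) g(x)^n dx) / (∫_Δ ψ(x) g(x)^n dx) converges, as n → ∞, to (∫ over {y ∈ ℝ^{t−1} : y_i ≤ z_i for all i} of exp(−yᵀHy) dy) / (∫_{ℝ^{t−1}} exp(−yᵀHy) dy). -/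
open MeasureTheory Filter Real

lemma vm_term_le {x a : ℝ} (hx : 0 < x) (hx1 : x ≤ 1) (ha : 0 < a) (ha1 : a ≤ 1) :
    a * log (x / a) ≤ x - a - (x - a) ^ 2 / 4 := by
  have hs : 0 < √x := sqrt_pos.2 hx
  have ht : 0 < √a := sqrt_pos.2 ha
  have hs2 : √x * √x = x := mul_self_sqrt hx.le
  have ht2 : √a * √a = a := mul_self_sqrt ha.le
  have hs1 : √x ≤ 1 := sqrt_le_one.2 hx1
  have ht1 : √a ≤ 1 := sqrt_le_one.2 ha1
  have h1 : log (x / a) = 2 * log (√x / √a) := by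
    rw [← sqrt_div hx.le, log_sqrt (by positivity)]; ring
  have h2 := log_le_sub_one_of_pos (div_pos hs ht)
  have h3 : a * log (x / a) ≤ 2 * (√x * √a - a) := by
    rw [h1]
    have : a * (√x / √a) = √x * √a := by
      field_simp; nlinarith
    nlinarith [mul_le_mul_of_nonneg_left h2 ha.le]
  have h4 : (x - a) ^ 2 / 4 ≤ (√x - √a) ^ 2 := by
    have : (x - a) ^ 2 = (√x - √a) ^ 2 * (√x + √a) ^ 2 := by
      nth_rw 1 [← hs2, ← ht2]; ring
    have h5 : (√x + √a) ^ 2 ≤ 4 := by nlinarith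
    nlinarith [mul_le_mul_of_nonneg_left h5 (sq_nonneg (√x - √a))]
  nlinarith

lemma vm_term_lim {a : ℝ} (ha : 0 < a) (y : ℝ) :
    Tendsto (fun n : ℕ => (n : ℝ) * (a * log ((a + y / √n) / a) - y / √n)) atTop
      (nhds (-(y ^ 2 / (2 * a)))) := by
  have hsq : Tendsto (fun n : ℕ => √(n : ℝ)) atTop atTop :=
    tendsto_sqrt_atTop.comp tendsto_natCast_atTop_atTop
  have hu : Tendsto (fun n : ℕ => |y / a| / √(n : ℝ)) atTop (nhds 0) :=
    hsq.const_div_atTop _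
  have hb : Tendsto (fun n : ℕ => (2 * a * |y / a| ^ 3) / √(n : ℝ)) atTop (nhds 0) :=
    hsq.const_div_atTop _
  rw [tendsto_iff_norm_sub_tendsto_zero]
  refine squeeze_zero' (Eventually.of_forall fun n => norm_nonneg _) ?_ hb
  filter_upwards [hu.eventually (gt_mem_nhds (show (0:ℝ) < 1 / 2 by norm_num)),
    eventually_ge_atTop 1] with n hn hn1
  have hn0 : (0 : ℝ) < n := by exact_mod_cast hn1
  have hs : 0 < √(n : ℝ) := sqrt_pos.2 hn0
  have hs2 : √(n : ℝ) ^ 2 = n := sq_sqrt hn0.le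
  set s := √(n : ℝ)
  set u := y / a / s with hu'
  have hau : |u| = |y / a| / s := by rw [hu', abs_div, abs_of_pos hs]
  have hu1 : |u| < 1 / 2 := by rw [hau]; exact hn
  have key := abs_log_sub_add_sum_range_le (x := -u) (by rw [abs_neg]; linarith) 2
  rw [abs_neg] at key
  simp only [Finset.sum_range_succ, Finset.sum_range_zero] at key
  have e1 : (a + y / s) / a = 1 - -u := by rw [hu']; field_simp; ring
  have e2 : y / s = a * u := by rw [hu']; field_simp
  have e3 : y ^ 2 / (2 * a) = n * a * u ^ 2 / 2 := by rw [hu', ← hs2]; field_simp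
  rw [e1, e2, e3, Real.norm_eq_abs]
  have e4 : (n : ℝ) * (a * log (1 - -u) - a * u) - -(n * a * u ^ 2 / 2)
    = n * a * (0 + (-u) ^ (0 + 1) / ((0 : ℕ) + 1) + (-u) ^ (1 + 1) / ((1 : ℕ) + 1) + log (1 - -u)) := by
    push_cast; ring
  rw [e4, abs_mul, abs_of_pos (by positivity : 0 < (n : ℝ) * a)]
  have k2 : |u| ^ (2 + 1) / (1 - |u|) ≤ 2 * |u| ^ 3 := by
    rw [div_le_iff₀ (by linarith)]
    have : 0 ≤ |u| ^ 3 := by positivity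
    rw [show 2 + 1 = 3 from rfl]
    nlinarith [mul_le_mul_of_nonneg_left hu1.le this]
  calc _ ≤ n * a * (2 * |u| ^ 3) := by
        gcongr; exact key.trans k2
    _ = _ := by rw [hau, ← hs2]; field_simp

noncomputable def vmG {m : ℕ} (p : Fin m → ℝ) (b : ℝ) (x : Fin m → ℝ) : ℝ :=
  (∏ i, (x i / p i) ^ (p i)) * ((1 - ∑ i, x i) / b) ^ b

noncomputable def vmD (m : ℕ) : Set (Fin m → ℝ) := {x | (∀ i, 0 < x i) ∧ ∑ i, x i < 1}

lemma vmD_meas (m : ℕ) : MeasurableSet (vmD m) := by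
  unfold vmD
  refine MeasurableSet.inter (s₁ := {x : Fin m → ℝ | ∀ i, 0 < x i}) (s₂ := {x | ∑ i, x i < 1}) ?_ ?_
  · simp only [Set.ofPred_forall]
    exact MeasurableSet.iInter fun i => measurableSet_lt measurable_const (measurable_pi_apply i)
  · exact measurableSet_lt (by fun_prop) measurable_const

lemma vmG_meas {m : ℕ} (p : Fin m → ℝ) (b : ℝ) : Measurable (vmG p b) := by
  unfold vmG; fun_prop

lemma vmG_eq {m : ℕ} {p : Fin m → ℝ} {b : ℝ} (hp : ∀ i, 0 < p i) (hb : 0 < b)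
    {x : Fin m → ℝ} (hx : x ∈ vmD m) :
    vmG p b x = exp (∑ i, p i * log (x i / p i) + b * log ((1 - ∑ i, x i) / b)) := by
  unfold vmG
  rw [exp_add, exp_sum]
  congr 1
  · refine Finset.prod_congr rfl fun i _ => ?_
    rw [rpow_def_of_pos (div_pos (hx.1 i) (hp i)), mul_comm]
  · rw [rpow_def_of_pos (div_pos (by linarith [hx.2]) hb), mul_comm]

lemma vmG_le {m : ℕ} {p : Fin m → ℝ} {b : ℝ} (hp : ∀ i, 0 < p i) (hb : 0 < b)
    (hs : ∑ i, p i + b = 1) {x : Fin m → ℝ} (hx : x ∈ vmD m) :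
    vmG p b x ≤ exp (-(∑ i, (x i - p i) ^ 2 / 4)) := by
  rw [vmG_eq hp hb hx]
  apply exp_le_exp.2
  have h1 : ∀ i, p i * log (x i / p i) ≤ x i - p i - (x i - p i) ^ 2 / 4 := fun i => by
    refine vm_term_le (hx.1 i) ?_ (hp i) ?_
    · linarith [Finset.single_le_sum (fun j _ => (hx.1 j).le) (Finset.mem_univ i), hx.2]
    · linarith [Finset.single_le_sum (fun j _ => (hp j).le) (Finset.mem_univ i)]
  have h2 : b * log ((1 - ∑ i, x i) / b) ≤ (1 - ∑ i, x i) - b := by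
    have := log_le_sub_one_of_pos (div_pos (show 0 < 1 - ∑ i, x i by linarith [hx.2]) hb)
    calc _ ≤ b * ((1 - ∑ i, x i) / b - 1) := by gcongr
      _ = _ := by field_simp
  have h3 := Finset.sum_le_sum (s := Finset.univ) (fun i _ => h1 i)
  rw [Finset.sum_sub_distrib, Finset.sum_sub_distrib] at h3
  linarith

noncomputable def vmQ {m : ℕ} (p : Fin m → ℝ) (b : ℝ) (y : Fin m → ℝ) : ℝ :=
  ∑ i, y i ^ 2 / (2 * p i) + (∑ i, y i) ^ 2 / (2 * b)

lemma vmQ_eq {m : ℕ} (p : Fin m → ℝ) (b : ℝ) (y : Fin m → ℝ) :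
    (∑ i, ∑ j, y i * (if i = j then (1/2) * (1 / p i + 1 / b) else 1 / (2 * b)) * y j)
      = vmQ p b y := by
  have : ∀ i j, y i * (if i = j then (1/2) * (1 / p i + 1 / b) else 1 / (2 * b)) * y j
      = (if i = j then y i ^ 2 / (2 * p i) else 0) + y i * y j / (2 * b) := by
    intro i j
    split_ifs with h
    · subst h; field_simp
    · ring
  simp only [this, Finset.sum_add_distrib, Finset.sum_ite_eq, Finset.mem_univ, if_true]
  unfold vmQ
  rw [sq, Finset.sum_mul_sum, Finset.sum_div]
  simp only [Finset.sum_div]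

lemma vm_int (m : ℕ) : Integrable (fun y : Fin m → ℝ => exp (-(∑ i, y i ^ 2 / 4))) := by
  have : (fun y : Fin m → ℝ => exp (-(∑ i, y i ^ 2 / 4)))
      = fun y => ∏ i, exp (-(1/4) * y i ^ 2) := by
    ext y; rw [← exp_sum, ← Finset.sum_neg_distrib]
    congr 1; exact Finset.sum_congr rfl fun i _ => by ring
  rw [this]
  exact Integrable.fintype_prod (f := fun _ x => exp (-(1/4) * x ^ 2))
    fun i => integrable_exp_neg_mul_sq (by norm_num)

lemma vmQ_int {m : ℕ} {p : Fin m → ℝ} {b : ℝ} (hp : ∀ i, 0 < p i) (hb : 0 < b)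
    (hs : ∑ i, p i + b = 1) : Integrable (fun y : Fin m → ℝ => exp (-vmQ p b y)) := by
  refine (vm_int m).mono' ?_ (Eventually.of_forall fun y => ?_)
  · apply Measurable.aestronglyMeasurable
    unfold vmQ; fun_prop
  · rw [norm_of_nonneg (exp_pos _).le]
    apply exp_le_exp.2
    have h1 : ∑ i, y i ^ 2 / 4 ≤ ∑ i, y i ^ 2 / (2 * p i) := by
      refine Finset.sum_le_sum fun i _ => ?_
      have : p i ≤ 1 := by
        linarith [Finset.single_le_sum (fun j _ => (hp j).le) (Finset.mem_univ i)]
      have := hp i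
      gcongr
      linarith
    have : 0 ≤ (∑ i, y i) ^ 2 / (2 * b) := by positivity
    unfold vmQ; linarith

noncomputable def vmF {m : ℕ} (p : Fin m → ℝ) (b : ℝ) (ψ : (Fin m → ℝ) → ℝ) (n : ℕ) : (Fin m → ℝ) → ℝ :=
  (vmD m).indicator fun x => ψ x * vmG p b x ^ n

lemma vmF_lim {m : ℕ} {p : Fin m → ℝ} {b : ℝ} (hp : ∀ i, 0 < p i) (hb : 0 < b)
    (hs : ∑ i, p i + b = 1) {ψ : (Fin m → ℝ) → ℝ} (hc : ContinuousAt ψ p) (y : Fin m → ℝ) :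
    Tendsto (fun n : ℕ => vmF p b ψ n (p + (√(n : ℝ))⁻¹ • y)) atTop
      (nhds (ψ p * exp (-vmQ p b y))) := by
  have hsq : Tendsto (fun n : ℕ => √(n : ℝ)) atTop atTop :=
    tendsto_sqrt_atTop.comp tendsto_natCast_atTop_atTop
  have hx : Tendsto (fun n : ℕ => p + (√(n : ℝ))⁻¹ • y) atTop (nhds p) := by
    have := (tendsto_inv_atTop_zero.comp hsq).smul_const y
    simpa using this.const_add p
  have hD : vmD m ∈ nhds p := by
    apply IsOpen.mem_nhds
    · unfold vmD
      refine IsOpen.inter (s := {x : Fin m → ℝ | ∀ i, 0 < x i}) (t := {x | ∑ i, x i < 1}) ?_ ?_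
      · simp only [Set.ofPred_forall]
        exact isOpen_iInter_of_finite fun i => isOpen_lt continuous_const (continuous_apply i)
      · exact isOpen_lt (by fun_prop) continuous_const
    · exact ⟨hp, by linarith⟩
  have hL : Tendsto (fun n : ℕ =>
      ∑ i, (n : ℝ) * (p i * log ((p i + y i / √n) / p i) - y i / √n) +
      (n : ℝ) * (b * log ((b + (-∑ i, y i) / √n) / b) - (-∑ i, y i) / √n)) atTop
      (nhds (-vmQ p b y)) := by
    have := (tendsto_finsetSum Finset.univ fun i _ => vm_term_lim (hp i) (y i)).add
      (vm_term_lim hb (-∑ i, y i))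
    convert this using 2
    unfold vmQ
    rw [Finset.sum_neg_distrib]; ring
  have := (hc.tendsto.comp hx).mul ((continuous_exp.tendsto _).comp hL)
  refine this.congr' ?_
  filter_upwards [hx.eventually hD] with n hn'
  have hn : p + (√(n : ℝ))⁻¹ • y ∈ vmD m := hn'
  simp only [Function.comp]
  unfold vmF
  rw [Set.indicator_of_mem hn, vmG_eq hp hb hn, ← exp_nat_mul]
  congr 2
  have e1 : ∀ i, (p + (√(n : ℝ))⁻¹ • y) i = p i + y i / √n := fun i => by
    simp [div_eq_inv_mul]
  have e2 : 1 - ∑ i, (p i + y i / √(n:ℝ)) = b + (-∑ i, y i) / √n := by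
    rw [Finset.sum_add_distrib, ← Finset.sum_div]; linear_combination -hs
  simp only [e1, e2]
  rw [← Finset.mul_sum, Finset.sum_sub_distrib, ← Finset.sum_div]
  ring

lemma vm_main {m : ℕ} {p : Fin m → ℝ} {b : ℝ} (hp : ∀ i, 0 < p i) (hb : 0 < b)
    (hs : ∑ i, p i + b = 1) {ψ : (Fin m → ℝ) → ℝ} (hc : ContinuousAt ψ p)
    (hψ : Measurable ψ) (h0 : ∀ x, 0 ≤ ψ x) {B : ℝ} (hB : ∀ x, ψ x ≤ B) (S : Set (Fin m → ℝ)) :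
    Tendsto (fun n : ℕ => ∫ y in S, vmF p b ψ n (p + (√(n : ℝ))⁻¹ • y)) atTop
      (nhds (∫ y in S, ψ p * exp (-vmQ p b y))) := by
  refine tendsto_integral_filter_of_dominated_convergence
    (fun y => B * exp (-(∑ i, y i ^ 2 / 4))) ?_ ?_ ?_ ?_
  · refine Eventually.of_forall fun n => Measurable.aestronglyMeasurable ?_
    have : Measurable (vmF p b ψ n) :=
      (hψ.mul ((vmG_meas p b).pow_const n)).indicator (vmD_meas m)
    exact this.comp (by fun_prop)
  · filter_upwards [eventually_ge_atTop 1] with n hn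
    refine Eventually.of_forall fun y => ?_
    have hn0 : (0 : ℝ) < n := by exact_mod_cast hn
    have hB0 : 0 ≤ B := (h0 0).trans (hB 0)
    unfold vmF
    by_cases hx : p + (√(n : ℝ))⁻¹ • y ∈ vmD m
    · have hG := vmG_le hp hb hs hx
      have hG0 : 0 ≤ vmG p b (p + (√(n : ℝ))⁻¹ • y) := by
        rw [vmG_eq hp hb hx]; exact (exp_pos _).le
      rw [Set.indicator_of_mem hx, norm_of_nonneg (mul_nonneg (h0 _) (pow_nonneg hG0 _))]
      refine mul_le_mul (hB _) ?_ (pow_nonneg hG0 _) hB0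
      refine (pow_le_pow_left₀ hG0 hG n).trans ?_
      rw [← exp_nat_mul]
      apply le_of_eq
      congr 1
      rw [mul_neg, Finset.mul_sum]
      congr 1
      refine Finset.sum_congr rfl fun i _ => ?_
      simp only [Pi.add_apply, Pi.smul_apply, smul_eq_mul, add_sub_cancel_left, mul_pow, inv_pow,
        sq_sqrt hn0.le]
      field_simp
    · rw [Set.indicator_of_notMem hx]; simp; positivity
  · exact ((vm_int m).const_mul B).integrableOn
  · exact Eventually.of_forall fun y => vmF_lim hp hb hs hc y

lemma vm_change_s13 {m : ℕ} (p : Fin m → ℝ) (b : ℝ) (ψ : (Fin m → ℝ) → ℝ) (n : ℕ) (hn : 1 ≤ n)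
    (z : Fin m → ℝ) :
    (∫ x in {x : Fin m → ℝ | ((∀ i, 0 < x i) ∧ ∑ i, x i < 1) ∧ ∀ i, x i ≤ p i + z i / √n},
      ψ x * vmG p b x ^ n) =
    |(((√(n:ℝ))⁻¹ ^ m)⁻¹)|⁻¹ * ∫ y in {y | ∀ i, y i ≤ z i}, vmF p b ψ n (p + (√(n : ℝ))⁻¹ • y) := by
  have hn0 : (0 : ℝ) < n := by exact_mod_cast hn
  have hsq : 0 < √(n : ℝ) := sqrt_pos.2 hn0
  have hT : MeasurableSet {x : Fin m → ℝ | ∀ i, x i ≤ p i + z i / √n} := by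
    simp only [Set.ofPred_forall]
    exact MeasurableSet.iInter fun i => measurableSet_le (measurable_pi_apply i) measurable_const
  have hT' : MeasurableSet {x : Fin m → ℝ | ∀ i, x i ≤ z i} := by
    simp only [Set.ofPred_forall]
    exact MeasurableSet.iInter fun i => measurableSet_le (measurable_pi_apply i) measurable_const
  have e1 : {x : Fin m → ℝ | ((∀ i, 0 < x i) ∧ ∑ i, x i < 1) ∧ ∀ i, x i ≤ p i + z i / √n}
    = {x | ∀ i, x i ≤ p i + z i / √n} ∩ vmD m := by
      ext x; simp [vmD, and_comm]
  rw [e1, ← setIntegral_indicator (vmD_meas m)]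
  change ∫ x in _, vmF p b ψ n x = _
  rw [← integral_indicator hT, ← integral_indicator hT']
  set f := Set.indicator {x : Fin m → ℝ | ∀ i, x i ≤ p i + z i / √n} (vmF p b ψ n) with hf
  have e2 : (Set.indicator {y : Fin m → ℝ | ∀ i, y i ≤ z i}
      fun y => vmF p b ψ n (p + (√(n : ℝ))⁻¹ • y)) = fun y => f (p + (√(n : ℝ))⁻¹ • y) := by
    ext y
    rw [hf]
    simp only [Set.indicator, Set.mem_ofPred_eq]
    congr 1
    simp only [eq_iff_iff]
    refine forall_congr' fun i => ?_
    simp only [Pi.add_apply, Pi.smul_apply, smul_eq_mul, add_le_add_iff_left]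
    rw [inv_mul_eq_div, div_le_div_iff_of_pos_right hsq]
  rw [e2, Measure.integral_comp_smul volume (fun x => f (p + x)), integral_add_left_eq_self]
  simp only [Module.finrank_fintype_fun_eq_card, Fintype.card_fin, smul_eq_mul]
  rw [← mul_assoc, inv_mul_cancel₀ (by positivity), one_mul]

lemma vm_change' {m : ℕ} (p : Fin m → ℝ) (b : ℝ) (ψ : (Fin m → ℝ) → ℝ) (n : ℕ) (hn : 1 ≤ n) :
    (∫ x in {x : Fin m → ℝ | (∀ i, 0 < x i) ∧ ∑ i, x i < 1}, ψ x * vmG p b x ^ n) =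
    |(((√(n:ℝ))⁻¹ ^ m)⁻¹)|⁻¹ * ∫ y, vmF p b ψ n (p + (√(n : ℝ))⁻¹ • y) := by
  have hn0 : (0 : ℝ) < n := by exact_mod_cast hn
  have hsq : 0 < √(n : ℝ) := sqrt_pos.2 hn0
  change ∫ x in vmD m, ψ x * vmG p b x ^ n = _
  rw [← integral_indicator (vmD_meas m)]
  change ∫ x, vmF p b ψ n x = _
  rw [Measure.integral_comp_smul volume (fun x => vmF p b ψ n (p + x)), integral_add_left_eq_self]
  simp only [Module.finrank_fintype_fun_eq_card, Fintype.card_fin, smul_eq_mul]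
  rw [← mul_assoc, inv_mul_cancel₀ (by positivity), one_mul]

/-- Von Mises's 1919 Bernstein–von Mises theorem for the multinomial model with
`t = m + 1 ≥ 2` categories, constant relative frequencies `a₁, …, a_t` and prior
density `ψ`: the posterior of `(x₁, …, x_{t−1})`, centered at `a = (a₁, …, a_{t−1})`
and scaled by `√n`, converges to the normal law with density proportional to
`exp(−yᵀHy)`, where `h^{ij} = 1/(2a_t)` for `i ≠ j` and
`h^{ii} = (1/2)(1/a_i + 1/a_t)`. -/
theorem vonMises_multinomial (m : ℕ) (hm : 1 ≤ m)
    (a : Fin (m + 1) → ℝ) (ha : ∀ i, a i ∈ Set.Ioo (0:ℝ) 1) (hsum : ∑ i, a i = 1)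
    (ψ : (Fin m → ℝ) → ℝ) (hψ_meas : Measurable ψ)
    (hψ_nonneg : ∀ x, 0 ≤ ψ x) (hψ_bdd : ∃ B, ∀ x, ψ x ≤ B)
    (hψ_cont : ContinuousAt ψ (fun i => a i.castSucc))
    (hψ_pos : 0 < ψ (fun i => a i.castSucc))
    (z : Fin m → ℝ) :
    Tendsto (fun n : ℕ =>
      (∫ x in {x : Fin m → ℝ | ((∀ i, 0 < x i) ∧ ∑ i, x i < 1) ∧
            ∀ i, x i ≤ a i.castSucc + z i / Real.sqrt n},
          ψ x * ((∏ i : Fin m, (x i / a i.castSucc) ^ (a i.castSucc)) *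
            ((1 - ∑ i, x i) / a (Fin.last m)) ^ (a (Fin.last m))) ^ n) /
      (∫ x in {x : Fin m → ℝ | (∀ i, 0 < x i) ∧ ∑ i, x i < 1},
          ψ x * ((∏ i : Fin m, (x i / a i.castSucc) ^ (a i.castSucc)) *
            ((1 - ∑ i, x i) / a (Fin.last m)) ^ (a (Fin.last m))) ^ n))
      atTop
      (nhds
        ((∫ y in {y : Fin m → ℝ | ∀ i, y i ≤ z i},
            Real.exp (-(∑ i, ∑ j, y i *
              (if i = j then (1/2) * (1 / a i.castSucc + 1 / a (Fin.last m))
               else 1 / (2 * a (Fin.last m))) * y j))) /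
         (∫ y : Fin m → ℝ,
            Real.exp (-(∑ i, ∑ j, y i *
              (if i = j then (1/2) * (1 / a i.castSucc + 1 / a (Fin.last m))
               else 1 / (2 * a (Fin.last m))) * y j))))) := by
  obtain ⟨B, hB⟩ := hψ_bdd
  set p : Fin m → ℝ := fun i => a i.castSucc with hp_def
  set b : ℝ := a (Fin.last m) with hb_def
  have hp : ∀ i, 0 < p i := fun i => (ha _).1
  have hb : 0 < b := (ha _).1
  have hs : ∑ i, p i + b = 1 := by rw [← hsum, Fin.sum_univ_castSucc]
  have l1 := vm_main hp hb hs hψ_cont hψ_meas hψ_nonneg hB {y | ∀ i, y i ≤ z i}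
  have l2 := vm_main hp hb hs hψ_cont hψ_meas hψ_nonneg hB Set.univ
  simp only [Measure.restrict_univ] at l2
  have hpos : 0 < ∫ y : Fin m → ℝ, exp (-vmQ p b y) := integral_exp_pos (vmQ_int hp hb hs)
  rw [integral_const_mul] at l1 l2
  have l3 := l1.div l2 (mul_pos hψ_pos hpos).ne'
  rw [mul_div_mul_left _ _ hψ_pos.ne'] at l3
  have hQ : ∀ y : Fin m → ℝ, (∑ i, ∑ j, y i *
      (if i = j then (1/2) * (1 / a i.castSucc + 1 / b) else 1 / (2 * b)) * y j) = vmQ p b y :=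
    fun y => vmQ_eq p b y
  simp only [hQ]
  refine l3.congr' ?_
  filter_upwards [eventually_ge_atTop 1] with n hn
  have hn0 : (0 : ℝ) < n := by exact_mod_cast hn
  have hsq : 0 < √(n : ℝ) := sqrt_pos.2 hn0
  have c1 := vm_change_s13 p b ψ n hn z
  have c2 := vm_change' p b ψ n hn
  unfold vmG at c1 c2
  rw [Pi.div_apply, c1, c2, mul_div_mul_left _ _ (by positivity)]
end

section
/- Let t ≥ 1, let a ∈ ℝ^t, let H be a positive definite t×t real matrix, and let f : ℝ^t → [0,1] be a measurable, integrable function with f(a) = 1, with f(a+h) = 1 − hᵀHh + o(|h|²) as h → 0, and such that for every δ > 0 one has sup over {x : |x−a| ≥ δ} of f(x) < 1. Let ψ : ℝ^t → ℝ be bounded, measurable, and continuous at a. Then for every measurable set Z ⊆ ℝ^t, ∫_Z ψ(a + z/√n) · f(a + z/√n)^n dz converges to ψ(a) · ∫_Z exp(−zᵀHz) dz as n → ∞. -/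
open MeasureTheory Filter Asymptotics

namespace VonMisesAux

/-- The quadratic form `hᵀHh`. -/
def Q {t : ℕ} (H : Matrix (Fin t) (Fin t) ℝ) (h : Fin t → ℝ) : ℝ := ∑ i, ∑ j, h i * H i j * h j

lemma Q_cont {t : ℕ} (H : Matrix (Fin t) (Fin t) ℝ) : Continuous (Q H) := by
  unfold Q; fun_prop

lemma Q_smul {t : ℕ} (H : Matrix (Fin t) (Fin t) ℝ) (r : ℝ) (h : Fin t → ℝ) :
    Q H (r • h) = r ^ 2 * Q H h := by
  simp only [Q, Finset.mul_sum, Pi.smul_apply, smul_eq_mul]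
  refine Finset.sum_congr rfl fun i _ => Finset.sum_congr rfl fun j _ => ?_
  ring

lemma Q_pos {t : ℕ} (H : Matrix (Fin t) (Fin t) ℝ) (hH : H.PosDef) (h : Fin t → ℝ) (hh : h ≠ 0) :
    0 < Q H h := by
  have := hH.dotProduct_mulVec_pos hh
  simpa [Q, dotProduct, Matrix.mulVec, Finset.mul_sum, mul_assoc] using this

lemma Q_lower {t : ℕ} (H : Matrix (Fin t) (Fin t) ℝ) (hH : H.PosDef) :
    ∃ m > 0, ∀ h, m * ‖h‖ ^ 2 ≤ Q H h := by
  have key : ∃ m > 0, ∀ h, ‖h‖ = 1 → m ≤ Q H h := by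
    by_cases hne : (Metric.sphere (0 : Fin t → ℝ) 1).Nonempty
    · obtain ⟨x, hx, hmin⟩ := (isCompact_sphere (0 : Fin t → ℝ) 1).exists_isMinOn hne
        (Q_cont H).continuousOn
      refine ⟨Q H x, Q_pos H hH x ?_, fun h hh => hmin (by simpa using hh)⟩
      rintro rfl
      simp at hx
    · refine ⟨1, one_pos, fun h hh => absurd ⟨h, by simpa using hh⟩ hne⟩
  obtain ⟨m, hm, hk⟩ := key
  refine ⟨m, hm, fun h => ?_⟩
  by_cases h0 : h = 0
  · subst h0; simp [Q]
  have hn : ‖h‖ ≠ 0 := by simpa using h0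
  have h1 := hk (‖h‖⁻¹ • h) (by rw [norm_smul, norm_inv, norm_norm, inv_mul_cancel₀ hn])
  rw [Q_smul, inv_pow] at h1
  have h2 : 0 < ‖h‖ ^ 2 := by positivity
  rw [inv_mul_eq_div, le_div_iff₀ h2] at h1
  exact h1

lemma gauss_int {t : ℕ} (ht : 1 ≤ t) {m : ℝ} (hm : 0 < m) :
    Integrable (fun z : Fin t → ℝ => Real.exp (-(m * ‖z‖ ^ 2))) := by
  have ht' : (0:ℝ) < t := by exact_mod_cast ht
  have h1 : Integrable (fun z : Fin t → ℝ => ∏ i, Real.exp (-(m / t) * (z i) ^ 2)) :=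
    Integrable.fintype_prod (f := fun _ x => Real.exp (-(m / t) * x ^ 2))
      (fun _ => integrable_exp_neg_mul_sq (by positivity))
  refine h1.mono' (by fun_prop) (Eventually.of_forall fun z => ?_)
  rw [Real.norm_eq_abs, Real.abs_exp, ← Real.exp_sum, Real.exp_le_exp, ← Finset.mul_sum]
  have h2 : ∑ i, (z i) ^ 2 ≤ t * ‖z‖ ^ 2 := by
    calc ∑ i, (z i) ^ 2 ≤ ∑ i : Fin t, ‖z‖ ^ 2 := by
          refine Finset.sum_le_sum fun i _ => ?_
          have := norm_le_pi_norm z i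
          rw [← sq_abs (z i)]
          gcongr
          simpa using this
      _ = t * ‖z‖ ^ 2 := by simp
  have h3 : m / t * ∑ i, (z i) ^ 2 ≤ m / t * (t * ‖z‖ ^ 2) := by gcongr
  have h4 : m / t * (t * ‖z‖ ^ 2) = m * ‖z‖ ^ 2 := by field_simp
  linarith

lemma inv_sqrt_tendsto : Tendsto (fun n : ℕ => (Real.sqrt n)⁻¹) atTop (nhds 0) :=
  tendsto_inv_atTop_zero.comp (Real.tendsto_sqrt_atTop.comp tendsto_natCast_atTop_atTop)

lemma smul_tendsto {t : ℕ} (z : Fin t → ℝ) :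
    Tendsto (fun n : ℕ => (Real.sqrt n)⁻¹ • z) atTop (nhds 0) := by
  simpa using inv_sqrt_tendsto.smul_const z

lemma pow_tendsto {t : ℕ} (a : Fin t → ℝ) (H : Matrix (Fin t) (Fin t) ℝ)
    (f : (Fin t → ℝ) → ℝ)
    (hexp : (fun h : Fin t → ℝ => f (a + h) - (1 - Q H h))
      =o[nhds 0] (fun h : Fin t → ℝ => ‖h‖ ^ 2)) (z : Fin t → ℝ) :
    Tendsto (fun n : ℕ => f (a + (Real.sqrt n)⁻¹ • z) ^ n) atTop (nhds (Real.exp (-Q H z))) := by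
  have h1 : Tendsto (fun n : ℕ => (n:ℝ) * (f (a + (Real.sqrt n)⁻¹ • z) - 1)) atTop
      (nhds (-Q H z)) := by
    have h2 := hexp.comp_tendsto (smul_tendsto z)
    have h3 : (fun n : ℕ => (n:ℝ) * (f (a + (Real.sqrt n)⁻¹ • z) - (1 - Q H ((Real.sqrt n)⁻¹ • z))))
        =o[atTop] (fun n : ℕ => (n:ℝ) * ‖(Real.sqrt n)⁻¹ • z‖ ^ 2) :=
      (isBigO_refl (fun n : ℕ => (n:ℝ)) atTop).mul_isLittleO h2
    have h4 : (fun n : ℕ => (n:ℝ) * ‖(Real.sqrt n)⁻¹ • z‖ ^ 2) =O[atTop] (fun _ => (1:ℝ)) := by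
      refine IsBigO.of_bound (‖z‖ ^ 2) ?_
      filter_upwards [eventually_gt_atTop 0] with n hn
      have hn' : (0:ℝ) < n := by exact_mod_cast hn
      rw [norm_smul, mul_pow, norm_inv, Real.norm_eq_abs (Real.sqrt n), inv_pow, sq_abs,
        Real.sq_sqrt hn'.le, ← mul_assoc, mul_inv_cancel₀ hn'.ne']
      simp
    have h5 := (isLittleO_one_iff ℝ).1 (h3.trans_isBigO h4)
    have h6 := h5.sub (tendsto_const_nhds (x := Q H z))
    rw [zero_sub] at h6
    refine h6.congr' ?_
    filter_upwards [eventually_gt_atTop 0] with n hn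
    have hn' : (0:ℝ) < n := by exact_mod_cast hn
    rw [Q_smul, inv_pow, Real.sq_sqrt hn'.le]
    field_simp
    ring
  refine (Real.tendsto_one_add_pow_exp_of_tendsto h1).congr fun n => ?_
  congr 1
  ring

lemma local_bound {t : ℕ} (a : Fin t → ℝ) (H : Matrix (Fin t) (Fin t) ℝ) (hH : H.PosDef)
    (f : (Fin t → ℝ) → ℝ)
    (hexp : (fun h : Fin t → ℝ => f (a + h) - (1 - Q H h))
      =o[nhds 0] (fun h : Fin t → ℝ => ‖h‖ ^ 2)) :
    ∃ m > 0, ∃ δ > 0, ∀ h, ‖h‖ < δ → f (a + h) ≤ Real.exp (-(m * ‖h‖ ^ 2)) := by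
  obtain ⟨m, hm, hQ⟩ := Q_lower H hH
  have h1 := hexp.def (half_pos hm)
  obtain ⟨δ, hδ, h2⟩ := Metric.eventually_nhds_iff.1 h1
  refine ⟨m / 2, half_pos hm, δ, hδ, fun h hh => ?_⟩
  have h3 := h2 (y := h) (by simpa using hh)
  rw [Real.norm_eq_abs, Real.norm_eq_abs, abs_of_nonneg (sq_nonneg ‖h‖)] at h3
  have h4 := (abs_le.1 h3).2
  have h5 := Real.add_one_le_exp (-(m / 2 * ‖h‖ ^ 2))
  have h6 := hQ h
  linarith

lemma main {t : ℕ} (ht : 1 ≤ t)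
    (a : Fin t → ℝ) (H : Matrix (Fin t) (Fin t) ℝ) (hH : H.PosDef)
    (f : (Fin t → ℝ) → ℝ) (hf_meas : Measurable f) (hf_int : Integrable f)
    (hf01 : ∀ x, f x ∈ Set.Icc (0:ℝ) 1)
    (hexp : (fun h : Fin t → ℝ => f (a + h) - (1 - Q H h))
      =o[nhds 0] (fun h : Fin t → ℝ => ‖h‖ ^ 2))
    (hsup : ∀ δ > 0, ∃ c < (1:ℝ), ∀ x, δ ≤ ‖x - a‖ → f x ≤ c)
    (ψ : (Fin t → ℝ) → ℝ) (hψ_meas : Measurable ψ) (hψ_bdd : ∃ B, ∀ x, |ψ x| ≤ B)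
    (hψ_cont : ContinuousAt ψ a)
    (Z : Set (Fin t → ℝ)) :
    Tendsto (fun n : ℕ =>
      ∫ z in Z, ψ (a + (Real.sqrt n)⁻¹ • z) * f (a + (Real.sqrt n)⁻¹ • z) ^ n)
      atTop
      (nhds (ψ a * ∫ z in Z, Real.exp (-Q H z))) := by
  obtain ⟨B, hB⟩ := hψ_bdd
  have hB0 : 0 ≤ B := (abs_nonneg _).trans (hB a)
  obtain ⟨m, hm, δ, hδ, hloc⟩ := local_bound a H hH f hexp
  obtain ⟨c₀, hc₀, hc₀f⟩ := hsup δ hδ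
  obtain ⟨c, hc0, hc1, hcf⟩ : ∃ c : ℝ, 0 < c ∧ c < 1 ∧ ∀ x, δ ≤ ‖x - a‖ → f x ≤ c :=
    ⟨max c₀ (1/2), by positivity, max_lt hc₀ (by norm_num),
      fun x hx => (hc₀f x hx).trans (le_max_left _ _)⟩
  set G : ℕ → (Fin t → ℝ) → ℝ := fun n z =>
    ψ (a + (Real.sqrt n)⁻¹ • z) * f (a + (Real.sqrt n)⁻¹ • z) ^ n with hG
  let S : ℕ → Set (Fin t → ℝ) := fun n => {z | ‖(Real.sqrt n)⁻¹ • z‖ < δ}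
  have hS : ∀ n, MeasurableSet (S n) := fun n =>
    measurableSet_lt (by fun_prop) measurable_const
  have hGm : ∀ n, Measurable (G n) := fun n => by
    have : Measurable (fun z : Fin t → ℝ => a + (Real.sqrt n)⁻¹ • z) := by fun_prop
    exact (hψ_meas.comp this).mul ((hf_meas.comp this).pow_const n)
  have hfi : ∀ n : ℕ, 0 < n → Integrable (fun z : Fin t → ℝ => f (a + (Real.sqrt n)⁻¹ • z)) := by
    intro n hn
    have : (Real.sqrt n)⁻¹ ≠ 0 := by positivity
    exact (hf_int.comp_add_left a).comp_smul this
  have hfI : ∀ n : ℕ, ∫ z, f (a + (Real.sqrt n)⁻¹ • z) = (Real.sqrt n) ^ t * ∫ z, f z := by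
    intro n
    rw [Measure.integral_comp_inv_smul_of_nonneg volume (fun z => f (a + z)) (Real.sqrt_nonneg _),
      integral_add_left_eq_self f a]
    simp
  have hGi : ∀ n : ℕ, 0 < n → Integrable (G n) := by
    intro n hn
    refine ((hfi n hn).const_mul B).mono' (hGm n).aestronglyMeasurable
      (Eventually.of_forall fun z => ?_)
    have h0 := hf01 (a + (Real.sqrt n)⁻¹ • z)
    rw [hG, Real.norm_eq_abs, abs_mul, abs_of_nonneg (pow_nonneg h0.1 n)]
    exact mul_le_mul (hB _) (pow_le_of_le_one h0.1 h0.2 hn.ne') (pow_nonneg h0.1 n) hB0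
  -- the inner part
  have inner : Tendsto (fun n => ∫ z in Z, (S n).indicator (G n) z) atTop
      (nhds (∫ z in Z, ψ a * Real.exp (-Q H z))) := by
    refine tendsto_integral_filter_of_dominated_convergence
      (fun z => B * Real.exp (-(m * ‖z‖ ^ 2))) ?_ ?_ ?_ ?_
    · exact Eventually.of_forall fun n => ((hGm n).indicator (hS n)).aestronglyMeasurable
    · filter_upwards [eventually_gt_atTop 0] with n hn
      refine Eventually.of_forall fun z => ?_
      have hn' : (0:ℝ) < n := by exact_mod_cast hn
      by_cases hz : z ∈ S n
      · rw [Set.indicator_of_mem hz]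
        have h0 := hf01 (a + (Real.sqrt n)⁻¹ • z)
        rw [hG, Real.norm_eq_abs, abs_mul, abs_of_nonneg (pow_nonneg h0.1 n)]
        refine mul_le_mul (hB _) ?_ (pow_nonneg h0.1 n) hB0
        refine (pow_le_pow_left₀ h0.1 (hloc _ hz) n).trans (le_of_eq ?_)
        rw [← Real.exp_nat_mul]
        congr 1
        rw [norm_smul, mul_pow, norm_inv, Real.norm_eq_abs (Real.sqrt n), inv_pow, sq_abs,
          Real.sq_sqrt hn'.le]
        field_simp
      · rw [Set.indicator_of_notMem hz, norm_zero]
        positivity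
    · exact ((gauss_int ht hm).const_mul B).integrableOn
    · refine Eventually.of_forall fun z => ?_
      have hs := smul_tendsto z
      have hadd : Tendsto (fun n : ℕ => a + (Real.sqrt n)⁻¹ • z) atTop (nhds a) := by
        simpa using hs.const_add a
      refine ((hψ_cont.tendsto.comp hadd).mul (pow_tendsto a H f hexp z)).congr' ?_
      have : ∀ᶠ n : ℕ in atTop, ‖(Real.sqrt n)⁻¹ • z‖ < δ := by
        have := hs.norm
        rw [norm_zero] at this
        exact this.eventually_lt_const hδ
      filter_upwards [this] with n hn
      rw [Set.indicator_of_mem (show z ∈ S n from hn)]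
      rfl
  -- the outer part
  have outer : Tendsto (fun n => ∫ z in Z, (S n)ᶜ.indicator (G n) z) atTop (nhds 0) := by
    have hlim : Tendsto (fun n : ℕ => B / c * (∫ z, f z) * ((n:ℝ) ^ t * c ^ n)) atTop (nhds 0) := by
      simpa using (tendsto_pow_const_mul_const_pow_of_abs_lt_one t
        (by rwa [abs_of_pos hc0] : |c| < 1)).const_mul (B / c * (∫ z, f z))
    have hI0 : 0 ≤ ∫ z, f z := integral_nonneg fun z => (hf01 z).1
    refine squeeze_zero_norm' ?_ hlim
    filter_upwards [eventually_gt_atTop 0] with n hn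
    have hn1 : (1:ℝ) ≤ n := by exact_mod_cast hn
    have hsq : Real.sqrt n ≤ n := by
      rw [Real.sqrt_le_left (by positivity)]
      nlinarith
    have hbd : ∀ z, ‖(S n)ᶜ.indicator (G n) z‖ ≤ B / c * c ^ n * f (a + (Real.sqrt n)⁻¹ • z) := by
      intro z
      have h0 := hf01 (a + (Real.sqrt n)⁻¹ • z)
      by_cases hz : z ∈ (S n)ᶜ
      · rw [Set.indicator_of_mem hz]
        rw [hG, Real.norm_eq_abs, abs_mul, abs_of_nonneg (pow_nonneg h0.1 n)]
        have hz' : δ ≤ ‖(Real.sqrt n)⁻¹ • z‖ := not_lt.1 hz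
        have h1 := hcf (a + (Real.sqrt n)⁻¹ • z) (by simpa using hz')
        obtain ⟨k, rfl⟩ : ∃ k, n = k + 1 := ⟨n - 1, by omega⟩
        have h2 : B / c * c ^ (k+1) * f (a + (Real.sqrt (k+1 : ℕ))⁻¹ • z)
            = B * (c ^ k * f (a + (Real.sqrt (k+1 : ℕ))⁻¹ • z)) := by
          field_simp
          ring
        rw [h2]
        refine mul_le_mul (hB _) ?_ (pow_nonneg h0.1 _) hB0
        rw [pow_succ]
        exact mul_le_mul_of_nonneg_right (pow_le_pow_left₀ h0.1 h1 k) h0.1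
      · rw [Set.indicator_of_notMem hz, norm_zero]
        have := h0.1
        positivity
    have hbi := (hfi n hn).const_mul (B / c * c ^ n)
    calc ‖∫ z in Z, (S n)ᶜ.indicator (G n) z‖
        ≤ ∫ z in Z, B / c * c ^ n * f (a + (Real.sqrt n)⁻¹ • z) :=
          norm_integral_le_of_norm_le hbi.integrableOn (Eventually.of_forall hbd)
      _ ≤ ∫ z, B / c * c ^ n * f (a + (Real.sqrt n)⁻¹ • z) :=
          setIntegral_le_integral hbi (Eventually.of_forall fun z =>
            (norm_nonneg _).trans (hbd z))
      _ = B / c * c ^ n * ((Real.sqrt n) ^ t * ∫ z, f z) := by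
          rw [integral_const_mul, hfI]
      _ ≤ B / c * c ^ n * ((n:ℝ) ^ t * ∫ z, f z) := by gcongr
      _ = B / c * (∫ z, f z) * ((n:ℝ) ^ t * c ^ n) := by ring
  have := inner.add outer
  rw [add_zero, integral_const_mul] at this
  refine this.congr' ?_
  filter_upwards [eventually_gt_atTop 0] with n hn
  rw [← integral_add ((hGi n hn).indicator (hS n)).integrableOn
    ((hGi n hn).indicator (hS n).compl).integrableOn]
  congr 1
  ext z
  exact congrFun (Set.indicator_self_add_compl (S n) (G n)) z

end VonMisesAux


/-- Von Mises's 1919 multi-dimensional auxiliary theorem (equal factors,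
constant matrix case): for `f ≤ 1` with a unique nondegenerate maximum
`f(a) = 1` and quadratic behavior `f(a+h) = 1 − hᵀHh + o(|h|²)` there,
`∫_Z ψ(a + z/√n) f(a + z/√n)^n dz → ψ(a) ∫_Z exp(−zᵀHz) dz`
for any measurable part of space `Z`. -/
theorem vonMises_aux_multi_dim (t : ℕ) (ht : 1 ≤ t)
    (a : Fin t → ℝ) (H : Matrix (Fin t) (Fin t) ℝ) (hH : H.PosDef)
    (f : (Fin t → ℝ) → ℝ) (hf_meas : Measurable f) (hf_int : Integrable f)
    (hf01 : ∀ x, f x ∈ Set.Icc (0:ℝ) 1) (hfa : f a = 1)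
    (hexp : (fun h : Fin t → ℝ => f (a + h) - (1 - ∑ i, ∑ j, h i * H i j * h j))
      =o[nhds 0] (fun h : Fin t → ℝ => ‖h‖ ^ 2))
    (hsup : ∀ δ > 0, ∃ c < (1:ℝ), ∀ x, δ ≤ ‖x - a‖ → f x ≤ c)
    (ψ : (Fin t → ℝ) → ℝ) (hψ_meas : Measurable ψ) (hψ_bdd : ∃ B, ∀ x, |ψ x| ≤ B)
    (hψ_cont : ContinuousAt ψ a)
    (Z : Set (Fin t → ℝ)) (hZ : MeasurableSet Z) :
    Tendsto (fun n : ℕ =>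
      ∫ z in Z, ψ (a + (Real.sqrt n)⁻¹ • z) * f (a + (Real.sqrt n)⁻¹ • z) ^ n)
      atTop
      (nhds (ψ a * ∫ z in Z, Real.exp (-(∑ i, ∑ j, z i * H i j * z j)))) := by
  exact VonMisesAux.main ht a H hH f hf_meas hf_int hf01 hexp hsup ψ hψ_meas hψ_bdd hψ_cont Z
end

section
/- Fix k ≥ 2 and p₁, …, p_k ∈ (0,1) with p₁ + ⋯ + p_k = 1. For each n let n₁^{(n)}, …, n_k^{(n)} be positive natural numbers with n₁^{(n)} + ⋯ + n_k^{(n)} = n, and suppose there is a constant K with |n_i^{(n)} − n p_i| ≤ K√n for all i and n. Then ∑_{i=1}^k n_i^{(n)} · log(n p_i / n_i^{(n)}) + (1/2) ∑_{i=1}^k (n_i^{(n)} − n p_i)² / (n p_i) converges to 0 as n → ∞. -/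
open Filter

lemma np_aux (m N : ℝ) (hm : 0 < m) (hN : 0 < N) (h : |N - m| ≤ m / 2) :
    |N * Real.log (m / N) + (N - m) + (1/2) * ((N - m) ^ 2 / m)| ≤ 4 * |N - m| ^ 3 / m ^ 2 := by
  obtain ⟨u, rfl⟩ : ∃ u, N = m * (1 + u) := ⟨N / m - 1, by field_simp; ring⟩
  have e1 : m * (1 + u) - m = m * u := by ring
  rw [e1, abs_mul, abs_of_pos hm] at h
  rw [e1, abs_mul m u, abs_of_pos hm]
  have hu : |u| ≤ 1 / 2 := by
    by_contra hc
    push Not at hc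
    nlinarith
  have h1u : 0 < 1 + u := pos_of_mul_pos_right hN hm.le
  have e2 : m / (m * (1 + u)) = (1 + u)⁻¹ := by field_simp
  rw [e2, Real.log_inv]
  have key := Real.abs_log_sub_add_sum_range_le (x := -u) (by rw [abs_neg]; linarith) 2
  simp only [Finset.sum_range_succ, Finset.sum_range_zero, abs_neg, sub_neg_eq_add] at key
  norm_num at key
  obtain ⟨R, hR⟩ : ∃ R, R = -u + u ^ 2 / 2 + Real.log (1 + u) := ⟨_, rfl⟩
  have hL : Real.log (1 + u) = u - u ^ 2 / 2 + R := by rw [hR]; ring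
  rw [← hR] at key
  have key2 : |R| ≤ 2 * |u| ^ 3 := by
    refine key.trans ?_
    rw [div_le_iff₀ (by linarith)]
    nlinarith [pow_nonneg (abs_nonneg u) 3]
  rw [hL]
  have e3 : m * (1 + u) * -(u - u ^ 2 / 2 + R) + m * u + 1 / 2 * ((m * u) ^ 2 / m)
      = m * (u ^ 3 / 2 - (1 + u) * R) := by field_simp; ring
  have e4 : 4 * (m * |u|) ^ 3 / m ^ 2 = m * (4 * |u| ^ 3) := by field_simp
  rw [e3, e4, abs_mul, abs_of_pos hm]
  refine mul_le_mul_of_nonneg_left ?_ hm.le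
  have h2 : |(1 + u) * R| ≤ 3 / 2 * (2 * |u| ^ 3) := by
    rw [abs_mul, abs_of_pos h1u]
    have := (abs_le.1 hu).2
    exact mul_le_mul (by linarith) key2 (abs_nonneg _) (by norm_num)
  have h3 : |u ^ 3 / 2| = |u| ^ 3 / 2 := by rw [abs_div, abs_pow]; norm_num
  have h4 := abs_sub (u ^ 3 / 2) ((1 + u) * R)
  have := pow_nonneg (abs_nonneg u) 3
  linarith

/-- Neyman–Pearson 1928 large-sample approximation of the log-likelihood ratio
by minus one half of Pearson's chi-square statistic:
`log λ + χ²/2 → 0` when all standardized cell deviations stay bounded. -/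
theorem neyman_pearson_loglik_chisq (k : ℕ) (hk : 2 ≤ k)
    (p : Fin k → ℝ) (hp : ∀ i, p i ∈ Set.Ioo (0:ℝ) 1) (hsum : ∑ i, p i = 1)
    (N : ℕ → Fin k → ℕ)
    (hpos : ∀ n, k ≤ n → ∀ i, 0 < N n i)
    (hN : ∀ n, k ≤ n → ∑ i, N n i = n)
    (K : ℝ) (hK : ∀ n, k ≤ n → ∀ i, |(N n i : ℝ) - n * p i| ≤ K * Real.sqrt n) :
    Tendsto (fun n : ℕ =>
      (∑ i, (N n i : ℝ) * Real.log ((n : ℝ) * p i / (N n i : ℝ))) +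
        (1/2) * ∑ i, ((N n i : ℝ) - n * p i) ^ 2 / ((n : ℝ) * p i))
      atTop (nhds 0) := by
  have hs : Tendsto (fun n : ℕ => Real.sqrt (n : ℝ)) atTop atTop :=
    Real.tendsto_sqrt_atTop.comp tendsto_natCast_atTop_atTop
  have main : ∀ i, Tendsto (fun n : ℕ => (N n i : ℝ) * Real.log ((n : ℝ) * p i / (N n i : ℝ))
      + ((N n i : ℝ) - n * p i) + (1/2) * (((N n i : ℝ) - n * p i) ^ 2 / ((n : ℝ) * p i)))
      atTop (nhds 0) := by
    intro i
    have hpi := (hp i).1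
    have hlim : Tendsto (fun n : ℕ => (4 * K ^ 3 / p i ^ 2) / Real.sqrt (n : ℝ)) atTop (nhds 0) :=
      tendsto_const_nhds.div_atTop hs
    refine squeeze_zero_norm' ?_ hlim
    filter_upwards [eventually_ge_atTop k, hs.eventually_ge_atTop (2 * K / p i)] with n hn hn2
    have hn0 : (0:ℝ) < n := by exact_mod_cast (by omega : 0 < n)
    have hsq : 0 < Real.sqrt (n : ℝ) := Real.sqrt_pos.2 hn0
    have hss : Real.sqrt (n : ℝ) ^ 2 = n := Real.sq_sqrt hn0.le
    rw [div_le_iff₀ hpi] at hn2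
    have hKn := hK n hn i
    have hm : 0 < (n : ℝ) * p i := by positivity
    rw [Real.norm_eq_abs]
    refine (np_aux _ _ hm (by exact_mod_cast hpos n hn i) (hKn.trans ?_)).trans ?_
    · have := mul_le_mul_of_nonneg_right hn2 hsq.le
      nlinarith
    · have h3 : |(N n i : ℝ) - n * p i| ^ 3 ≤ (K * Real.sqrt n) ^ 3 :=
        pow_le_pow_left₀ (abs_nonneg _) hKn 3
      calc _ ≤ 4 * (K * Real.sqrt n) ^ 3 / ((n : ℝ) * p i) ^ 2 := by gcongr
        _ = _ := by
          generalize Real.sqrt (n : ℝ) = s at *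
          rw [← hss]
          field_simp
  have tot := tendsto_finsetSum Finset.univ (fun i _ => main i)
  rw [Finset.sum_const_zero] at tot
  refine tot.congr' ?_
  filter_upwards [eventually_ge_atTop k] with n hn
  have hd : ∑ i, ((N n i : ℝ) - n * p i) = 0 := by
    rw [Finset.sum_sub_distrib, ← Finset.mul_sum, hsum, ← Nat.cast_sum, hN n hn]
    ring
  rw [Finset.sum_add_distrib, Finset.sum_add_distrib, hd, ← Finset.mul_sum, add_zero]
end

section
/- Fix k ≥ 2 and p₁, …, p_k ∈ (0,1) with p₁ + ⋯ + p_k = 1. For each n let n₁^{(n)}, …, n_k^{(n)} be positive natural numbers with n₁^{(n)} + ⋯ + n_k^{(n)} = n, and suppose there is a constant K with |n_i^{(n)} − n p_i| ≤ K√n for all i and n. Then ∑_{i=1}^k (n_i^{(n)} − n p_i)² / (n p_i) − ∑_{i=1}^k (n_i^{(n)} − n p_i)² / n_i^{(n)} converges to 0 as n → ∞. -/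
open Filter

/-- Asymptotic equality between Pearson's chi-square statistic
`χ² = ∑ (n_i − p_i n)²/(p_i n)` and Neyman's 'inverse' analogue
`χ̃² = ∑ (n_i − p_i n)²/n_i` when all standardized cell deviations stay bounded. -/
theorem chisq_vs_inverse_chisq (k : ℕ) (hk : 2 ≤ k)
    (p : Fin k → ℝ) (hp : ∀ i, p i ∈ Set.Ioo (0:ℝ) 1) (hsum : ∑ i, p i = 1)
    (N : ℕ → Fin k → ℕ)
    (hpos : ∀ n, k ≤ n → ∀ i, 0 < N n i)
    (hN : ∀ n, k ≤ n → ∑ i, N n i = n)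
    (K : ℝ) (hK : ∀ n, k ≤ n → ∀ i, |(N n i : ℝ) - n * p i| ≤ K * Real.sqrt n) :
    Tendsto (fun n : ℕ =>
      (∑ i, ((N n i : ℝ) - n * p i) ^ 2 / ((n : ℝ) * p i)) -
        ∑ i, ((N n i : ℝ) - n * p i) ^ 2 / (N n i : ℝ))
      atTop (nhds 0) := by
  simp_rw [← Finset.sum_sub_distrib]
  have hs : Tendsto (fun n : ℕ => Real.sqrt (n : ℝ)) atTop atTop :=
    Real.tendsto_sqrt_atTop.comp tendsto_natCast_atTop_atTop
  rw [← Finset.sum_const_zero (s := (Finset.univ : Finset (Fin k))) (M := ℝ)]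
  refine tendsto_finsetSum _ fun i _ => ?_
  have hp0 : 0 < p i := (hp i).1
  refine squeeze_zero_norm' (a := fun n : ℕ => (2 * K ^ 3 / p i ^ 2) / Real.sqrt n) ?_
    (hs.const_div_atTop _)
  filter_upwards [hs.eventually_ge_atTop (2 * K / p i), hs.eventually_gt_atTop 0,
    eventually_ge_atTop k] with n h1 h2 h3
  have hd := hK n h3 i
  have hNp : (0 : ℝ) < N n i := by exact_mod_cast hpos n h3 i
  have hsq : (n : ℝ) = Real.sqrt n ^ 2 := (Real.sq_sqrt (Nat.cast_nonneg n)).symm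
  generalize (N n i : ℝ) = m at *
  generalize Real.sqrt (n : ℝ) = s at *
  rw [hsq] at hd ⊢
  generalize p i = q at *
  have hlow : s ^ 2 * q / 2 ≤ m := by
    rw [div_le_iff₀ hp0] at h1
    have := (abs_le.mp hd).1
    nlinarith
  have e : (m - s ^ 2 * q) ^ 2 / (s ^ 2 * q) - (m - s ^ 2 * q) ^ 2 / m
      = (m - s ^ 2 * q) ^ 3 / (s ^ 2 * q * m) := by
    field_simp
    try ring
  have hden : 0 < s ^ 2 * q * m := by positivity
  rw [e, Real.norm_eq_abs, abs_div, abs_pow, abs_of_pos hden]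
  have hKs : 0 ≤ K * s := (abs_nonneg _).trans hd
  calc |m - s ^ 2 * q| ^ 3 / (s ^ 2 * q * m)
      ≤ (K * s) ^ 3 / (s ^ 2 * q * (s ^ 2 * q / 2)) := by gcongr
    _ = 2 * K ^ 3 / q ^ 2 / s := by field_simp
end

section
/- Let t ≥ 2, let a₁, …, a_t ∈ (0,1) with a₁ + ⋯ + a_t = 1, write a := (a₁, …, a_{t−1}), and let Δ := {x ∈ ℝ^{t−1} : x_i > 0 for all i and x₁ + ⋯ + x_{t−1} < 1}. Let ψ : ℝ^{t−1} → [0,∞) be bounded, measurable, continuous at a, with ψ(a) > 0. For each n let n₁^{(n)}, …, n_t^{(n)} be natural numbers with n₁^{(n)} + ⋯ + n_t^{(n)} = n and n_i^{(n)}/n → a_i for each i. For p ∈ Δ write p_t := 1 − p₁ − ⋯ − p_{t−1} and χ̃_n²(p) := ∑_{i=1}^t (n_i^{(n)} − p_i n)² / n_i^{(n)}. Then for every c > 0, the posterior probability (∫ over {p ∈ Δ : χ̃_n²(p) ≥ c²} of ψ(p) ∏_{i=1}^{t} p_i^{n_i^{(n)}} dp) / (∫_Δ ψ(p) ∏_{i=1}^{t}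 p_i^{n_i^{(n)}} dp) converges, as n → ∞, to (∫_c^∞ x^{t−2} e^{−x²/2} dx) / (∫_0^∞ x^{t−2} e^{−x²/2} dx). -/
open MeasureTheory Filter Real

/-- The full probability vector in the `(m+1)`-category multinomial model
determined by its first `m` coordinates `p`: the last coordinate is
`1 − p₁ − ⋯ − p_m`. -/
noncomputable def fullProb (m : ℕ) (p : Fin m → ℝ) : Fin (m + 1) → ℝ :=
  fun i => if h : (i : ℕ) < m then p ⟨i, h⟩ else 1 - ∑ j, p j


lemma per_cell {p q : ℝ} (hp : 0 < p) (hp1 : p ≤ 1) (hq : 0 < q) (hq1 : q ≤ 1) :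
    q * Real.log (p / q) ≤ (p - q) - (p - q) ^ 2 / 4 := by
  obtain ⟨x, hx, rfl⟩ : ∃ x, 0 < x ∧ x ^ 2 = p := ⟨√p, by positivity, Real.sq_sqrt hp.le⟩
  obtain ⟨y, hy, rfl⟩ : ∃ x, 0 < x ∧ x ^ 2 = q := ⟨√q, by positivity, Real.sq_sqrt hq.le⟩
  have hx1 : x ≤ 1 := by nlinarith
  have hy1 : y ≤ 1 := by nlinarith
  rw [← div_pow, Real.log_pow]
  have h := Real.log_le_sub_one_of_pos (div_pos hx hy)
  have h2 : y ^ 2 * Real.log (x / y) ≤ y ^ 2 * (x / y - 1) := by gcongr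
  have h3 : y ^ 2 * (x / y - 1) = x * y - y ^ 2 := by field_simp
  have h4 : (x ^ 2 - y ^ 2) ^ 2 ≤ 4 * (x - y) ^ 2 := by
    have : (x + y) ^ 2 ≤ 4 := by nlinarith
    calc (x ^ 2 - y ^ 2) ^ 2 = (x + y) ^ 2 * (x - y) ^ 2 := by ring
      _ ≤ _ := by gcongr
  push_cast
  nlinarith

lemma radial {m : ℕ} (hm : 1 ≤ m) {F : Type*} [NormedAddCommGroup F] [NormedSpace ℝ F]
    (L : (Fin m → ℝ) →ₗ[ℝ] F) (hL : Function.Injective L) :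
    (∃ C : ℝ, 0 < C ∧ ∀ f : ℝ → ℝ, ∫ u, f ‖L u‖ = C * ∫ y in Set.Ioi (0:ℝ), y ^ (m - 1) * f y) ∧
    ∀ r : ℝ, ∀ᵐ u, ‖L u‖ ≠ r := by
  let e := (LinearEquiv.ofInjective L hL).toContinuousLinearEquiv
  let V := LinearMap.range L
  have he : ∀ u, ‖e u‖ = ‖L u‖ := fun u => rfl
  have : FiniteDimensional ℝ V := inferInstanceAs (FiniteDimensional ℝ (LinearMap.range L))
  let _ : MeasurableSpace V := borel V
  have : BorelSpace V := ⟨rfl⟩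
  let μ : Measure V := Measure.map e volume
  have : μ.IsAddHaarMeasure := e.isAddHaarMeasure_map volume
  have hd : Module.finrank ℝ V = m := by
    rw [← (LinearEquiv.ofInjective L hL).finrank_eq]; simp
  have : Nontrivial V := Module.nontrivial_of_finrank_pos (R := ℝ) (by omega)
  have hem : Measurable e := e.continuous.measurable
  refine ⟨⟨m * μ.real (Metric.ball 0 1), ?_, ?_⟩, ?_⟩
  · have : 0 < μ.real (Metric.ball 0 1) :=
      ENNReal.toReal_pos (Metric.measure_ball_pos _ _ one_pos).ne' measure_ball_lt_top.ne
    have : (0:ℝ) < m := by exact_mod_cast hm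
    positivity
  · intro f
    have h := integral_fun_norm_addHaar μ f
    rw [hd] at h
    have h2 : ∫ v, f ‖v‖ ∂μ = ∫ u, f ‖L u‖ := by
      exact e.toHomeomorph.toMeasurableEquiv.measurableEmbedding.integral_map (fun v : V => f ‖v‖)
    rw [← h2, h]
    simp [nsmul_eq_mul, mul_assoc]
  · intro r
    have h := Measure.addHaar_sphere μ 0 r
    rw [Measure.map_apply hem Metric.isClosed_sphere.measurableSet] at h
    rw [ae_iff]
    convert h using 2
    ext u
    simp [← he]

lemma fullProb_castSucc (m : ℕ) (p : Fin m → ℝ) (i : Fin m) : fullProb m p i.castSucc = p i := by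
  simp [fullProb]

lemma fullProb_last (m : ℕ) (p : Fin m → ℝ) : fullProb m p (Fin.last m) = 1 - ∑ j, p j := by
  simp [fullProb]

/-- Full increment vector. -/
noncomputable def wv (m : ℕ) (u : Fin m → ℝ) : Fin (m + 1) → ℝ := fullProb m u - fullProb m 0

lemma wv_castSucc (m : ℕ) (p : Fin m → ℝ) (i : Fin m) : wv m p i.castSucc = p i := by
  simp [wv, fullProb_castSucc]

lemma wv_last (m : ℕ) (p : Fin m → ℝ) : wv m p (Fin.last m) = - ∑ j, p j := by
  simp [wv, fullProb_last]

lemma wv_sum (m : ℕ) (u : Fin m → ℝ) : ∑ i, wv m u i = 0 := by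
  simp [Fin.sum_univ_castSucc, wv_castSucc, wv_last]

lemma fullProb_affine (m : ℕ) (q : Fin (m + 1) → ℝ) (hq : ∑ i, q i = 1) (s : ℝ) (u : Fin m → ℝ)
    (i : Fin (m + 1)) :
    fullProb m ((fun j => q j.castSucc) + s • u) i = q i + s * wv m u i := by
  rw [Fin.sum_univ_castSucc] at hq
  induction i using Fin.lastCases with
  | last =>
    simp [fullProb_last, wv_last, Finset.sum_add_distrib, ← Finset.mul_sum]
    linarith
  | cast i => simp [fullProb_castSucc, wv_castSucc]

lemma fullProb_pos_iff (m : ℕ) (p : Fin m → ℝ) :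
    ((∀ i, 0 < p i) ∧ ∑ i, p i < 1) ↔ ∀ i, 0 < fullProb m p i := by
  constructor
  · rintro ⟨h1, h2⟩ i
    induction i using Fin.lastCases with
    | last => rw [fullProb_last]; linarith
    | cast i => rw [fullProb_castSucc]; exact h1 i
  · intro h
    refine ⟨fun i => by simpa [fullProb_castSucc] using h i.castSucc, ?_⟩
    have := h (Fin.last m)
    rw [fullProb_last] at this
    linarith

lemma fullProb_sum (m : ℕ) (p : Fin m → ℝ) : ∑ i, fullProb m p i = 1 := by
  simp [Fin.sum_univ_castSucc, fullProb_castSucc, fullProb_last]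

lemma measurable_fullProb (m : ℕ) (i : Fin (m + 1)) : Measurable fun p => fullProb m p i := by
  induction i using Fin.lastCases with
  | last => simp only [fullProb_last]; fun_prop
  | cast i => simp only [fullProb_castSucc]; fun_prop

/-- Euclidean embedding. -/
noncomputable def Lmap (m : ℕ) (a : Fin (m + 1) → ℝ) :
    (Fin m → ℝ) →ₗ[ℝ] EuclideanSpace ℝ (Fin (m + 1)) where
  toFun u := WithLp.toLp 2 (fun i => wv m u i / √(a i))
  map_add' u v := by
    ext i
    induction i using Fin.lastCases with
    | last => simp [wv_last, Finset.sum_add_distrib]; ring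
    | cast i => simp [wv_castSucc]; ring
  map_smul' r u := by
    ext i
    induction i using Fin.lastCases with
    | last => simp [wv_last, ← Finset.mul_sum]; ring
    | cast i => simp [wv_castSucc]; ring

lemma Lmap_inj (m : ℕ) (a : Fin (m + 1) → ℝ) (ha : ∀ i, 0 < a i) :
    Function.Injective (Lmap m a) := by
  intro u v h
  ext i
  have h1 := congrArg (fun x => x i.castSucc) h
  have : √(a i.castSucc) ≠ 0 := (Real.sqrt_pos.2 (ha _)).ne'
  simpa [Lmap, wv_castSucc, this] using h1

lemma Lmap_norm (m : ℕ) (a : Fin (m + 1) → ℝ) (ha : ∀ i, 0 < a i) (u : Fin m → ℝ) :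
    ‖Lmap m a u‖ ^ 2 = ∑ i, wv m u i ^ 2 / a i := by
  rw [EuclideanSpace.norm_sq_eq]
  refine Finset.sum_congr rfl fun i _ => ?_
  simp [Lmap, div_pow, Real.sq_sqrt (ha i).le]

/-- One-cell second-order expansion. -/
lemma cell_limit (k : ℕ → ℝ) (a w : ℝ) (ha : 0 < a)
    (hk : Tendsto (fun n : ℕ => k n / n) atTop (nhds a)) :
    Tendsto (fun n : ℕ => k n * Real.log (1 + (√n)⁻¹ * w / (k n / n)) - √n * w) atTop
      (nhds (-(w ^ 2 / a) / 2)) := by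
  have hs : Tendsto (fun n : ℕ => (√(n:ℝ))⁻¹) atTop (nhds 0) :=
    (Real.tendsto_sqrt_atTop.comp tendsto_natCast_atTop_atTop).inv_tendsto_atTop
  set x : ℕ → ℝ := fun n => (√(n:ℝ))⁻¹ * w / (k n / n) with hx
  have hx0 : Tendsto x atTop (nhds 0) := by
    have h := (hs.mul_const w).div hk ha.ne'
    rw [zero_mul, zero_div] at h
    exact h
  have hq : Tendsto (fun n : ℕ => w ^ 2 / (k n / n)) atTop (nhds (w ^ 2 / a)) :=
    tendsto_const_nhds.div hk ha.ne'
  have hbd : Tendsto (fun n : ℕ => (w ^ 2 / (k n / n)) * (|x n| / (1 - |x n|))) atTop (nhds 0) := by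
    have h1 : Tendsto (fun n => |x n|) atTop (nhds 0) := by simpa using hx0.abs
    have := hq.mul (h1.div (tendsto_const_nhds (x := (1:ℝ)).sub h1) (by simp))
    simpa using this
  have hdiff : Tendsto (fun n : ℕ => (k n * Real.log (1 + x n) - √n * w)
      + (w ^ 2 / (k n / n)) / 2) atTop (nhds 0) := by
    refine squeeze_zero_norm' ?_ hbd
    have h1 : ∀ᶠ n in atTop, |x n| < 1 := by
      have h1 : Tendsto (fun n => |x n|) atTop (nhds 0) := by simpa using hx0.abs
      exact h1.eventually_lt_const one_pos
    filter_upwards [h1, eventually_gt_atTop 0, hk.eventually_const_lt ha] with n hn hn0 hkn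
    have hnp : (0:ℝ) < n := by exact_mod_cast hn0
    have hkp : 0 < k n := by
      by_contra h
      exact absurd hkn (not_lt.2 (div_nonpos_of_nonpos_of_nonneg (not_lt.1 h) hnp.le))
    have hkx : k n * x n = √n * w := by
      have : √(n:ℝ) ≠ 0 := (Real.sqrt_pos.2 hnp).ne'
      simp only [hx]
      field_simp
      rw [Real.sq_sqrt hnp.le]
      ring
    have hkx2 : k n * x n ^ 2 = w ^ 2 / (k n / n) := by
      have : √(n:ℝ) ≠ 0 := (Real.sqrt_pos.2 hnp).ne'
      simp only [hx]
      field_simp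
      rw [Real.sq_sqrt hnp.le]
      ring
    have h := Real.abs_log_sub_add_sum_range_le (x := -x n) (by simpa using hn) 2
    simp only [Finset.sum_range_succ, Finset.sum_range_zero, abs_neg] at h
    rw [← hkx, ← hkx2, Real.norm_eq_abs]
    calc |k n * Real.log (1 + x n) - k n * x n + k n * x n ^ 2 / 2|
        = k n * |Real.log (1 + x n) - x n + x n ^ 2 / 2| := by
          rw [← abs_of_pos hkp, ← abs_mul, abs_of_pos hkp]; ring_nf
      _ ≤ k n * (|x n| ^ 3 / (1 - |x n|)) := by
          gcongr
          refine le_trans (le_of_eq ?_) h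
          congr 1
          push_cast
          rw [sub_neg_eq_add]
          ring
      _ = k n * x n ^ 2 * (|x n| / (1 - |x n|)) := by
          rw [← sq_abs (x n)]; ring
  have := hdiff.sub (hq.div_const 2)
  simp only [add_sub_cancel_right] at this
  convert this using 2
  ring

/-- Normalised posterior integrand. -/
noncomputable def Hint (m : ℕ) (ψ : (Fin m → ℝ) → ℝ) (N : ℕ → Fin (m + 1) → ℕ) (c : ℝ) (n : ℕ)
    (p : Fin m → ℝ) : ℝ :=
  {p : Fin m → ℝ | ((∀ i, 0 < p i) ∧ ∑ i, p i < 1) ∧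
            c ^ 2 ≤ ∑ i, ((N n i : ℝ) - fullProb m p i * n) ^ 2 / (N n i : ℝ)}.indicator
    (fun p => ψ p * ∏ i, (fullProb m p i / ((N n i : ℝ) / n)) ^ N n i) p

lemma meas_set (m : ℕ) (N : ℕ → Fin (m + 1) → ℕ) (c : ℝ) (n : ℕ) :
    MeasurableSet {p : Fin m → ℝ | ((∀ i, 0 < p i) ∧ ∑ i, p i < 1) ∧
            c ^ 2 ≤ ∑ i, ((N n i : ℝ) - fullProb m p i * n) ^ 2 / (N n i : ℝ)} := by
  have h := measurable_fullProb m
  have h1 : MeasurableSet {p : Fin m → ℝ | ∀ i, 0 < p i} := by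
    rw [Set.ofPred_forall]
    exact MeasurableSet.iInter fun i => measurableSet_lt measurable_const (measurable_pi_apply i)
  have h2 : MeasurableSet {p : Fin m → ℝ | ∑ i, p i < 1} :=
    measurableSet_lt (by fun_prop) measurable_const
  have h3 : MeasurableSet {p : Fin m → ℝ |
      c ^ 2 ≤ ∑ i, ((N n i : ℝ) - fullProb m p i * n) ^ 2 / (N n i : ℝ)} := by
    refine measurableSet_le measurable_const ?_
    exact Finset.measurable_sum _ fun i _ => (((h i).mul_const _).const_sub _ |>.pow_const 2).div_const _
  exact (h1.inter h2).inter h3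

lemma meas_Hint (m : ℕ) (ψ : (Fin m → ℝ) → ℝ) (hψ : Measurable ψ)
    (N : ℕ → Fin (m + 1) → ℕ) (c : ℝ) (n : ℕ) : Measurable (Hint m ψ N c n) := by
  refine Measurable.indicator ?_ (meas_set m N c n)
  exact hψ.mul (Finset.measurable_prod _ fun i _ =>
    ((measurable_fullProb m i).div_const _).pow_const _)

lemma scale (m : ℕ) (ψ : (Fin m → ℝ) → ℝ) (N : ℕ → Fin (m + 1) → ℕ) (n : ℕ) (hn : 0 < n)
    (hpos : ∀ i, 0 < N n i) (c : ℝ) :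
    (∫ p in {p : Fin m → ℝ | ((∀ i, 0 < p i) ∧ ∑ i, p i < 1) ∧
            c ^ 2 ≤ ∑ i, ((N n i : ℝ) - fullProb m p i * n) ^ 2 / (N n i : ℝ)},
          ψ p * ∏ i, fullProb m p i ^ N n i) =
      ((∏ i, ((N n i : ℝ) / n) ^ N n i) * (√(n:ℝ) ^ m)⁻¹) *
      ∫ u, Hint m ψ N c n ((fun j => (N n j.castSucc : ℝ) / n) + (√(n:ℝ))⁻¹ • u) := by
  have hnp : (0:ℝ) < n := by exact_mod_cast hn
  have hs : 0 < √(n:ℝ) := Real.sqrt_pos.2 hnp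
  have hq : ∀ i, (0:ℝ) < (N n i : ℝ) / n := fun i => div_pos (by exact_mod_cast hpos i) hnp
  rw [Measure.integral_comp_inv_smul volume
    (fun v : Fin m → ℝ => Hint m ψ N c n ((fun j : Fin m => (N n j.castSucc : ℝ) / n) + v)),
    integral_add_left_eq_self]
  simp only [Module.finrank_fin_fun, smul_eq_mul]
  rw [abs_of_pos (by positivity), mul_assoc, inv_mul_cancel_left₀ (by positivity)]
  unfold Hint
  rw [integral_indicator (meas_set m N c n), ← integral_const_mul]
  congr 1
  ext p
  simp only [div_pow (fullProb m p _), Finset.prod_div_distrib]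
  have : (∏ i, ((N n i : ℝ) / n) ^ N n i) ≠ 0 :=
    (Finset.prod_pos fun i _ => pow_pos (hq i) _).ne'
  field_simp

lemma Hint_bound (m : ℕ) (ψ : (Fin m → ℝ) → ℝ) (N : ℕ → Fin (m + 1) → ℕ)
    (hN : ∀ n, ∑ i, N n i = n) (hψ0 : ∀ x, 0 ≤ ψ x) (B : ℝ) (hB : ∀ x, ψ x ≤ B)
    (n : ℕ) (hn : 0 < n)
    (hpos : ∀ i, 0 < N n i) (c : ℝ) (u : Fin m → ℝ) :
    ‖Hint m ψ N c n ((fun j => (N n j.castSucc : ℝ) / n) + (√(n:ℝ))⁻¹ • u)‖ ≤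
      B * ∏ i, Real.exp (-(1/4) * u i ^ 2) := by
  have hnp : (0:ℝ) < n := by exact_mod_cast hn
  have hs : 0 < √(n:ℝ) := Real.sqrt_pos.2 hnp
  have hq : ∀ i, (0:ℝ) < (N n i : ℝ) / n := fun i => div_pos (by exact_mod_cast hpos i) hnp
  have hqs : ∑ i, (N n i : ℝ) / n = 1 := by
    rw [← Finset.sum_div, ← Nat.cast_sum, hN, div_self hnp.ne']
  have hB0 : 0 ≤ B := (hψ0 0).trans (hB 0)
  have hle : ∀ f : Fin (m + 1) → ℝ, (∀ i, 0 < f i) → ∑ i, f i = 1 → ∀ i, f i ≤ 1 := by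
    intro f h1 h2 i
    rw [← h2]
    exact Finset.single_le_sum (fun j _ => (h1 j).le) (Finset.mem_univ i)
  set p := (fun j : Fin m => (N n j.castSucc : ℝ) / n) + (√(n:ℝ))⁻¹ • u with hp
  have hfp : ∀ i, fullProb m p i = (N n i : ℝ) / n + (√(n:ℝ))⁻¹ * wv m u i := fun i =>
    fullProb_affine m (fun i => (N n i : ℝ) / n) hqs _ u i
  by_cases hmem : p ∈ {p : Fin m → ℝ | ((∀ i, 0 < p i) ∧ ∑ i, p i < 1) ∧
            c ^ 2 ≤ ∑ i, ((N n i : ℝ) - fullProb m p i * n) ^ 2 / (N n i : ℝ)}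
  · rw [Hint, Set.indicator_of_mem hmem]
    have hpp := (fullProb_pos_iff m p).1 hmem.1
    have hpr : 0 ≤ ∏ i, (fullProb m p i / ((N n i : ℝ) / n)) ^ N n i :=
      Finset.prod_nonneg fun i _ => pow_nonneg (div_nonneg (hpp i).le (hq i).le) _
    rw [Real.norm_of_nonneg (mul_nonneg (hψ0 _) hpr)]
    refine mul_le_mul (hB _) ?_ hpr hB0
    have hcell : ∀ i, (fullProb m p i / ((N n i : ℝ) / n)) ^ N n i ≤
        Real.exp (√n * wv m u i - wv m u i ^ 2 / 4) := by
      intro i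
      have h := per_cell (hpp i) (hle _ hpp (fullProb_sum m p) i) (hq i) (hle _ hq hqs i)
      rw [← Real.exp_log (div_pos (hpp i) (hq i)), ← Real.exp_nat_mul, Real.exp_le_exp]
      have h2 := mul_le_mul_of_nonneg_left h hnp.le
      have e1 : fullProb m p i - (N n i : ℝ) / n = (√(n:ℝ))⁻¹ * wv m u i := by rw [hfp]; ring
      rw [e1] at h2
      have e2 : (n:ℝ) * ((√(n:ℝ))⁻¹ * wv m u i - ((√(n:ℝ))⁻¹ * wv m u i) ^ 2 / 4) =
          √n * wv m u i - wv m u i ^ 2 / 4 := by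
        have e3 : (n:ℝ) = √n * √n := (Real.mul_self_sqrt hnp.le).symm
        rw [e3, Real.sqrt_mul_self hs.le]
        field_simp
      rw [e2] at h2
      refine le_trans (le_of_eq ?_) h2
      field_simp
    calc _ ≤ ∏ i, Real.exp (√n * wv m u i - wv m u i ^ 2 / 4) :=
          Finset.prod_le_prod (fun i _ => pow_nonneg (div_nonneg (hpp i).le (hq i).le) _)
            fun i _ => hcell i
      _ = Real.exp (-∑ i, wv m u i ^ 2 / 4) := by
          rw [← Real.exp_sum, Finset.sum_sub_distrib, ← Finset.mul_sum, wv_sum]; simp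
      _ ≤ _ := by
          rw [← Real.exp_sum, Real.exp_le_exp, Fin.sum_univ_castSucc, ← Finset.mul_sum,
            ← Finset.sum_div]
          simp only [wv_castSucc]
          nlinarith [sq_nonneg (wv m u (Fin.last m))]
  · rw [Hint, Set.indicator_of_notMem hmem, norm_zero]
    exact mul_nonneg hB0 (Finset.prod_nonneg fun i _ => (Real.exp_pos _).le)

lemma Hint_tendsto (m : ℕ) (a : Fin (m + 1) → ℝ) (ha : ∀ i, 0 < a i)
    (ψ : (Fin m → ℝ) → ℝ)
    (hψ_cont : ContinuousAt ψ (fun i => a i.castSucc))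
    (N : ℕ → Fin (m + 1) → ℕ)
    (hN : ∀ n, ∑ i, N n i = n)
    (hfreq : ∀ i, Tendsto (fun n : ℕ => (N n i : ℝ) / n) atTop (nhds (a i)))
    (c : ℝ) (hc : 0 ≤ c) (u : Fin m → ℝ) (hu : ‖Lmap m a u‖ ≠ c) :
    Tendsto (fun n => Hint m ψ N c n ((fun j => (N n j.castSucc : ℝ) / n) + (√(n:ℝ))⁻¹ • u)) atTop
      (nhds (ψ (fun i => a i.castSucc) *
        (if c ≤ ‖Lmap m a u‖ then Real.exp (-‖Lmap m a u‖ ^ 2 / 2) else 0))) := by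
  have hs : Tendsto (fun n : ℕ => (√(n:ℝ))⁻¹) atTop (nhds 0) :=
    (Real.tendsto_sqrt_atTop.comp tendsto_natCast_atTop_atTop).inv_tendsto_atTop
  set p : ℕ → Fin m → ℝ := fun n => (fun j : Fin m => (N n j.castSucc : ℝ) / n) + (√(n:ℝ))⁻¹ • u
    with hp
  have hplim : Tendsto p atTop (nhds (fun i => a i.castSucc)) := by
    rw [tendsto_pi_nhds]
    intro i
    have := (hfreq i.castSucc).add (hs.mul_const (u i))
    simpa [hp] using this
  have hψlim : Tendsto (fun n => ψ (p n)) atTop (nhds (ψ (fun i => a i.castSucc))) :=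
    hψ_cont.tendsto.comp hplim
  have hQlim : Tendsto (fun n => ∑ i, wv m u i ^ 2 / ((N n i : ℝ) / n)) atTop
      (nhds (‖Lmap m a u‖ ^ 2)) := by
    rw [Lmap_norm m a ha]
    exact tendsto_finsetSum _ fun i _ => tendsto_const_nhds.div (hfreq i) (ha i).ne'
  have hElim : Tendsto (fun n : ℕ => Real.exp (∑ i, ((N n i : ℝ) *
      Real.log (1 + (√n)⁻¹ * wv m u i / ((N n i : ℝ) / n)) - √n * wv m u i))) atTop
      (nhds (Real.exp (-‖Lmap m a u‖ ^ 2 / 2))) := by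
    refine (Real.continuous_exp.tendsto _).comp ?_
    have : -‖Lmap m a u‖ ^ 2 / 2 = ∑ i, -(wv m u i ^ 2 / a i) / 2 := by
      rw [Lmap_norm m a ha, ← Finset.sum_div, Finset.sum_neg_distrib]
    rw [this]
    exact tendsto_finsetSum _ fun i _ => cell_limit (fun n => N n i) (a i) _ (ha i) (hfreq i)
  have hfp : ∀ n, 0 < n → ∀ i,
      fullProb m (p n) i = (N n i : ℝ) / n + (√(n:ℝ))⁻¹ * wv m u i := by
    intro n hn i
    have hqs : ∑ i, (N n i : ℝ) / n = 1 := by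
      rw [← Finset.sum_div, ← Nat.cast_sum, hN, div_self (by exact_mod_cast hn.ne')]
    exact fullProb_affine m (fun i => (N n i : ℝ) / n) hqs _ u i
  have hpos : ∀ᶠ n in atTop, ∀ i, 0 < (N n i : ℝ) / n + (√(n:ℝ))⁻¹ * wv m u i := by
    rw [eventually_all]
    intro i
    have := (hfreq i).add (hs.mul_const (wv m u i))
    rw [zero_mul, add_zero] at this
    exact this.eventually_const_lt (ha i)
  have hqpos : ∀ᶠ n : ℕ in atTop, ∀ i, 0 < (N n i : ℝ) / n := by
    rw [eventually_all]
    exact fun i => (hfreq i).eventually_const_lt (ha i)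
  have hchi : ∀ n, 0 < n → (∀ i, 0 < (N n i : ℝ) / n) →
      ∑ i, ((N n i : ℝ) - fullProb m (p n) i * n) ^ 2 / (N n i : ℝ) =
      ∑ i, wv m u i ^ 2 / ((N n i : ℝ) / n) := by
    intro n hn hq
    refine Finset.sum_congr rfl fun i _ => ?_
    have hnp : (0:ℝ) < n := by exact_mod_cast hn
    have hs0 : 0 < √(n:ℝ) := Real.sqrt_pos.2 hnp
    have hN0 : (N n i : ℝ) ≠ 0 := fun h => by simpa [h] using hq i
    rw [hfp n hn]
    field_simp
    have e3 : (n:ℝ) = √n ^ 2 := (Real.sq_sqrt hnp.le).symm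
    rw [← e3]
    ring
  by_cases hcu : c ≤ ‖Lmap m a u‖
  · rw [if_pos hcu]
    have hlt : c ^ 2 < ‖Lmap m a u‖ ^ 2 := by
      have := lt_of_le_of_ne hcu hu.symm
      gcongr
    refine (hψlim.mul hElim).congr' ?_
    filter_upwards [hpos, hqpos, eventually_gt_atTop 0, hQlim.eventually_const_lt hlt] with
      n h1 h2 hn h3
    rw [Hint, Set.indicator_of_mem]
    · congr 1
      rw [Finset.sum_sub_distrib, ← Finset.mul_sum, wv_sum, mul_zero, sub_zero, Real.exp_sum]
      refine Finset.prod_congr rfl fun i _ => ?_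
      have e : 1 + (√(n:ℝ))⁻¹ * wv m u i / ((N n i : ℝ) / n) =
          fullProb m (p n) i / ((N n i : ℝ) / n) := by
        rw [hfp n hn, add_div, div_self (h2 i).ne']
      rw [e, Real.exp_nat_mul, Real.exp_log (div_pos (by rw [hfp n hn]; exact h1 i) (h2 i))]
    · refine ⟨(fullProb_pos_iff m _).2 fun i => by rw [hfp n hn]; exact h1 i, ?_⟩
      rw [hchi n hn h2]
      exact h3.le
  · rw [if_neg hcu, mul_zero]
    have hlt : ‖Lmap m a u‖ ^ 2 < c ^ 2 := by
      have := not_le.1 hcu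
      gcongr
    refine tendsto_const_nhds.congr' ?_
    filter_upwards [hqpos, eventually_gt_atTop 0, hQlim.eventually_lt_const hlt] with
      n h2 hn h3
    rw [Hint, Set.indicator_of_notMem]
    rintro ⟨-, h⟩
    rw [hchi n hn h2] at h
    exact absurd h3 (not_lt.2 h)

lemma key (m : ℕ) (hm : 1 ≤ m) (a : Fin (m + 1) → ℝ) (ha : ∀ i, 0 < a i)
    (ψ : (Fin m → ℝ) → ℝ) (hψ_meas : Measurable ψ)
    (hψ0 : ∀ x, 0 ≤ ψ x) (B : ℝ) (hB : ∀ x, ψ x ≤ B)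
    (hψ_cont : ContinuousAt ψ (fun i => a i.castSucc))
    (N : ℕ → Fin (m + 1) → ℕ)
    (hN : ∀ n, ∑ i, N n i = n)
    (hfreq : ∀ i, Tendsto (fun n : ℕ => (N n i : ℝ) / n) atTop (nhds (a i)))
    (hpos : ∀ᶠ n in atTop, 0 < n ∧ ∀ i, 0 < N n i)
    (c : ℝ) (hc : 0 ≤ c) :
    Tendsto (fun n => ∫ u, Hint m ψ N c n ((fun j => (N n j.castSucc : ℝ) / n) + (√(n:ℝ))⁻¹ • u))
      atTop (nhds (∫ u, ψ (fun i => a i.castSucc) *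
        (if c ≤ ‖Lmap m a u‖ then Real.exp (-‖Lmap m a u‖ ^ 2 / 2) else 0))) := by
  refine tendsto_integral_filter_of_dominated_convergence
    (fun u => B * ∏ i, Real.exp (-(1/4) * u i ^ 2)) ?_ ?_ ?_ ?_
  · refine Eventually.of_forall fun n => Measurable.aestronglyMeasurable ?_
    exact (meas_Hint m ψ hψ_meas N c n).comp (by fun_prop)
  · filter_upwards [hpos] with n hn
    exact Eventually.of_forall fun u => Hint_bound m ψ N hN hψ0 B hB n hn.1 hn.2 c u
  · refine Integrable.const_mul ?_ B
    exact Integrable.fintype_prod (f := fun _ x => Real.exp (-(1/4) * x ^ 2)) fun i =>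
      integrable_exp_neg_mul_sq (by norm_num)
  · filter_upwards [(radial hm (Lmap m a) (Lmap_inj m a ha)).2 c] with u hu
    exact Hint_tendsto m a ha ψ hψ_cont N hN hfreq c hc u hu

lemma tail_eq (m : ℕ) (c : ℝ) (hc : 0 < c) :
    (∫ y in Set.Ioi (0:ℝ), y ^ (m - 1) * (if c ≤ y then Real.exp (-y ^ 2 / 2) else 0)) =
      ∫ x in Set.Ioi c, x ^ (m - 1) * Real.exp (-x ^ 2 / 2) := by
  rw [← integral_Ici_eq_integral_Ioi (x := c), ← integral_indicator measurableSet_Ioi,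
    ← integral_indicator measurableSet_Ici]
  congr 1
  ext y
  by_cases h : c ≤ y
  · simp [Set.indicator, h, hc.trans_le h]
  · simp [Set.indicator, h]

lemma total_eq (m : ℕ) :
    (∫ y in Set.Ioi (0:ℝ), y ^ (m - 1) * (if 0 ≤ y then Real.exp (-y ^ 2 / 2) else 0)) =
      ∫ x in Set.Ioi 0, x ^ (m - 1) * Real.exp (-x ^ 2 / 2) := by
  refine setIntegral_congr_fun measurableSet_Ioi fun y hy => ?_
  simp [(Set.mem_Ioi.1 hy).le]

lemma total_pos (m : ℕ) :
    0 < ∫ x in Set.Ioi (0:ℝ), x ^ (m - 1) * Real.exp (-x ^ 2 / 2) := by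
  have h := integral_rpow_mul_exp_neg_mul_rpow (p := 2) (q := ((m - 1 : ℕ) : ℝ)) (b := 1 / 2)
    (by norm_num) (by have : (0:ℝ) ≤ ((m - 1 : ℕ) : ℝ) := Nat.cast_nonneg _
                      linarith) (by norm_num)
  have e : (∫ x in Set.Ioi (0:ℝ), x ^ (m - 1) * Real.exp (-x ^ 2 / 2)) =
      ∫ x in Set.Ioi (0:ℝ), x ^ ((m - 1 : ℕ) : ℝ) * Real.exp (-(1 / 2) * x ^ (2:ℝ)) := by
    refine setIntegral_congr_fun measurableSet_Ioi fun y hy => ?_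
    simp only [Real.rpow_natCast, Real.rpow_two]
    congr 2
    ring
  rw [e, h]
  have := Real.Gamma_pos_of_pos (s := (((m - 1 : ℕ) : ℝ) + 1) / 2) (by positivity)
  positivity

/-- Neyman's (1930/1932) a-posteriori analogue of the chi-square test: under
the multinomial posterior (with prior density `ψ`) for the probability vector
`p` given observed counts `N n i` with relative frequencies converging to
`a_i ∈ (0,1)`, the posterior probability that
`χ̃² = ∑ (N n i − p_i n)²/(N n i) ≥ c²` converges to the chi distribution tail
with `t − 1 = m` degrees of freedom. -/
theorem neyman_posterior_chisq (m : ℕ) (hm : 1 ≤ m)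
    (a : Fin (m + 1) → ℝ) (ha : ∀ i, a i ∈ Set.Ioo (0:ℝ) 1) (hsum : ∑ i, a i = 1)
    (ψ : (Fin m → ℝ) → ℝ) (hψ_meas : Measurable ψ)
    (hψ_nonneg : ∀ x, 0 ≤ ψ x) (hψ_bdd : ∃ B, ∀ x, ψ x ≤ B)
    (hψ_cont : ContinuousAt ψ (fun i => a i.castSucc))
    (hψ_pos : 0 < ψ (fun i => a i.castSucc))
    (N : ℕ → Fin (m + 1) → ℕ)
    (hN : ∀ n, ∑ i, N n i = n)
    (hfreq : ∀ i, Tendsto (fun n : ℕ => (N n i : ℝ) / n) atTop (nhds (a i)))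
    (c : ℝ) (hc : 0 < c) :
    Tendsto (fun n : ℕ =>
      (∫ p in {p : Fin m → ℝ | ((∀ i, 0 < p i) ∧ ∑ i, p i < 1) ∧
            c ^ 2 ≤ ∑ i, ((N n i : ℝ) - fullProb m p i * n) ^ 2 / (N n i : ℝ)},
          ψ p * ∏ i, fullProb m p i ^ N n i) /
      (∫ p in {p : Fin m → ℝ | (∀ i, 0 < p i) ∧ ∑ i, p i < 1},
          ψ p * ∏ i, fullProb m p i ^ N n i))
      atTop
      (nhds ((∫ x in Set.Ioi c, x ^ (m - 1) * Real.exp (-x ^ 2 / 2)) /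
             (∫ x in Set.Ioi (0:ℝ), x ^ (m - 1) * Real.exp (-x ^ 2 / 2)))) := by
  have ha0 : ∀ i, 0 < a i := fun i => (ha i).1
  obtain ⟨B, hB⟩ := hψ_bdd
  obtain ⟨C, hC, hrad⟩ := (radial hm (Lmap m a) (Lmap_inj m a ha0)).1
  have hpos : ∀ᶠ n in atTop, 0 < n ∧ ∀ i, 0 < N n i := by
    refine (eventually_gt_atTop 0).and ?_
    rw [eventually_all]
    intro i
    filter_upwards [(hfreq i).eventually_const_lt (ha0 i)] with n hn
    refine Nat.pos_of_ne_zero fun h => ?_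
    simp [h] at hn
  have hlim : ∀ d : ℝ, 0 ≤ d → Tendsto (fun n => ∫ u, Hint m ψ N d n
      ((fun j => (N n j.castSucc : ℝ) / n) + (√(n:ℝ))⁻¹ • u)) atTop
      (nhds (ψ (fun i => a i.castSucc) * (C * ∫ y in Set.Ioi (0:ℝ),
        y ^ (m - 1) * (if d ≤ y then Real.exp (-y ^ 2 / 2) else 0)))) := by
    intro d hd
    have h := key m hm a ha0 ψ hψ_meas hψ_nonneg B hB hψ_cont N hN hfreq hpos d hd
    rw [integral_const_mul, hrad (fun y => if d ≤ y then Real.exp (-y ^ 2 / 2) else 0)] at h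
    exact h
  have h1 := hlim c hc.le
  have h0 := hlim 0 le_rfl
  rw [tail_eq m c hc] at h1
  rw [total_eq m] at h0
  have hI := total_pos m
  have hdiv := h1.div h0 (by positivity)
  rw [mul_div_mul_left _ _ hψ_pos.ne', mul_div_mul_left _ _ hC.ne'] at hdiv
  refine hdiv.congr' ?_
  filter_upwards [hpos] with n hn
  have hset : {p : Fin m → ℝ | (∀ i, 0 < p i) ∧ ∑ i, p i < 1} =
      {p : Fin m → ℝ | ((∀ i, 0 < p i) ∧ ∑ i, p i < 1) ∧
            (0:ℝ) ^ 2 ≤ ∑ i, ((N n i : ℝ) - fullProb m p i * n) ^ 2 / (N n i : ℝ)} := by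
    ext p
    simp only [Set.mem_ofPred_eq]
    refine ⟨fun h => ⟨h, ?_⟩, fun h => h.1⟩
    rw [zero_pow two_ne_zero]
    exact Finset.sum_nonneg fun i _ => by positivity
  rw [hset, scale m ψ N n hn.1 hn.2 c, scale m ψ N n hn.1 hn.2 0, mul_div_mul_left]
  · rfl
  · have hnp : (0:ℝ) < n := by exact_mod_cast hn.1
    have hq : ∀ i, (0:ℝ) < (N n i : ℝ) / n := fun i => div_pos (by exact_mod_cast hn.2 i) hnp
    have : 0 < √(n:ℝ) := Real.sqrt_pos.2 hnp
    exact (mul_pos (Finset.prod_pos fun i _ => pow_pos (hq i) _) (by positivity)).ne'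
end
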